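/- arXiv:2507.01566 — 2 statements merged into one kernel-verified Lean document; each statement's English description precedes it below -/
import Mathlib

section
/- For a compact set E ⊆ ℝ² with nonempty interior define the first Dirichlet Laplacian eigenvalue λ₁(E) = inf { ∫_{ℝ²} ‖∇u(x)‖² dx : u ∈ C_c^∞(ℝ²), supp u ⊆ interior(E), ∫_{ℝ²} u(x)² dx = 1 }. Then, for any regular hexagon H* with |H*| = 1, λ₁(H*) ≤ λ₁(H) for every H ∈ 𝓗 with |H| = 1; that is, among convex polygons of unit area that tile the plane by translations, the regular hexagon minimizes the first Dirichlet Laplacian eigenvalue. -/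
open MeasureTheory Metric Filter Real Set
open scoped Topology ENNReal NNReal RealInnerProductSpace

noncomputable section

/-- The Euclidean plane. -/
abbrev E2 : Type := EuclideanSpace ℝ (Fin 2)

/-- The line through `x` with direction `v`. -/
def lineThrough (x v : E2) : Set E2 := {y : E2 | ∃ t : ℝ, y = x + t • v}

/-- Steiner symmetrization of `A` with respect to the affine line `{x | ⟪x, v⟫ = c}`,
where `v` is a unit normal vector of the line. -/
def steiner (v : E2) (c : ℝ) (A : Set E2) : Set E2 :=
  {y : E2 | ∃ x : E2, ⟪x, v⟫ = c ∧ (A ∩ lineThrough x v).Nonempty ∧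
    ∃ r : ℝ, y = x + r • v ∧
      ENNReal.ofReal (2 * |r|) ≤ μH[1] (A ∩ lineThrough x v)}

/-- The class `𝓗` of centrally symmetric convex hexagons (possibly degenerated to
parallelograms), i.e. the convex polygons tiling the plane by translations. -/
def Hex (H : Set E2) : Prop :=
  (∃ x₀ p q r : E2, H = (fun y => x₀ + y) '' convexHull ℝ ({p, q, r, -p, -q, -r} : Set E2)) ∧
  (interior H).Nonempty

/-- The `k`-th vertex of the standard regular hexagon. -/
def hexVertex (k : ℕ) : E2 :=
  (WithLp.equiv 2 (Fin 2 → ℝ)).symm ![Real.cos (k * π / 3), Real.sin (k * π / 3)]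

/-- The standard regular hexagon, with vertices `(cos (kπ/3), sin (kπ/3))`, `k = 0, …, 5`. -/
def stdHexagon : Set E2 := convexHull ℝ (Set.range fun k : Fin 6 => hexVertex k)

/-- A similarity of the plane (composition of a rotation, a dilation and a translation,
possibly with a reflection). -/
def IsSimilarity (f : E2 → E2) : Prop :=
  ∃ s : ℝ, 0 < s ∧ ∀ x y, dist (f x) (f y) = s * dist x y

/-- A regular hexagon is any image of the standard one under a similarity. -/
def IsRegularHexagon (H : Set E2) : Prop := ∃ f : E2 → E2, IsSimilarity f ∧ H = f '' stdHexagon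

/-- Convergence of a sequence of sets in the Hausdorff distance. -/
def HausdorffTendsto (Hn : ℕ → Set E2) (H : Set E2) : Prop :=
  Tendsto (fun n => EMetric.hausdorffEdist (Hn n) H) atTop (𝓝 0)

/-- The planar cross product (determinant) of two vectors. -/
def det2 (u w : E2) : ℝ := u 0 * w 1 - u 1 * w 0

/-- `A, B, C, D, E, F` are (consecutive) vertices of the centrally symmetric hexagon `H`:
`H` is their convex hull, `D, E, F` are the antipodes of `A, B, C` with respect to a center
`o`, and `H` has nonempty interior. -/
def HexWithVertices (A B C D E F : E2) (H : Set E2) : Prop :=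
  H = convexHull ℝ ({A, B, C, D, E, F} : Set E2) ∧
  (∃ o : E2, D = (2:ℝ) • o - A ∧ E = (2:ℝ) • o - B ∧ F = (2:ℝ) • o - C) ∧
  (interior H).Nonempty

/-- The vertices `A, B, C, D, E, F` are listed in counterclockwise order. -/
def CCWList (A B C D E F : E2) : Prop :=
  0 ≤ det2 (B - A) (C - B) ∧ 0 ≤ det2 (C - B) (D - C) ∧ 0 ≤ det2 (D - C) (E - D) ∧
  0 ≤ det2 (E - D) (F - E) ∧ 0 ≤ det2 (F - E) (A - F) ∧ 0 ≤ det2 (A - F) (B - A)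

/-- The six vertices are distinct and no three of them are collinear. -/
def NondegenerateHex (A B C D E F : E2) : Prop :=
  [A, B, C, D, E, F].Pairwise (· ≠ ·) ∧
  ∀ P Q R : E2, P ∈ ({A, B, C, D, E, F} : Set E2) → Q ∈ ({A, B, C, D, E, F} : Set E2) →
    R ∈ ({A, B, C, D, E, F} : Set E2) → P ≠ Q → P ≠ R → Q ≠ R →
      ¬ Collinear ℝ ({P, Q, R} : Set E2)

/-- The first Dirichlet Laplacian eigenvalue of a compact set `E ⊆ ℝ²` with nonempty
interior, defined by the Rayleigh quotient over smooth compactly supported functions with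
support in the interior of `E`. -/
def dirichletEigenvalue (E : Set E2) : ℝ :=
  sInf {t : ℝ | ∃ u : E2 → ℝ, ContDiff ℝ (⊤ : ℕ∞) u ∧ HasCompactSupport u ∧
    tsupport u ⊆ interior E ∧ (∫ x : E2, u x ^ 2) = 1 ∧
    t = ∫ x : E2, ‖fderiv ℝ u x‖ ^ 2}

/-!
A lower bound `c` for the first eigenvalue of `E` is a Poincaré inequality
`c * ∫ u ^ 2 ≤ ∫ ‖∇u‖ ^ 2` for test functions supported in `E`. Steiner symmetrization
preserves the left-hand integral and, by the Pólya–Szegő inequality, does not increase the Dirichlet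
energy; so a Poincaré inequality on the symmetrized domain implies the same one on the
original domain. The symmetrized function need not be smooth, so its energy is measured through
the `L²` norms of its increments, and mollification turns it into a test function.

Symmetrizing a centrally symmetric hexagon of area one with respect to the perpendicular of a
diagonal gives a hexagon with two axes of symmetry. Such hexagons form a two-parameter family, on
which symmetrization with respect to the perpendicular of another diagonal acts by an explicit map.
Its iterates converge to a fixed point, the regular hexagon, and so the constant of the regular
hexagon is inherited by every hexagon.
-/

/-! ### Symmetric decreasing rearrangement -/

lemma sq_lintegral_le_measure_univ_mul {α : Type*} [MeasurableSpace α] {μ : Measure α}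
    {f : α → ℝ≥0∞} (hf : AEMeasurable f μ) : (∫⁻ x, f x ∂μ) ^ 2 ≤ μ univ * ∫⁻ x, f x ^ 2 ∂μ := by
  have holder := ENNReal.lintegral_mul_le_Lp_mul_Lq μ Real.HolderConjugate.two_two hf
    (aemeasurable_const (b := (1 : ℝ≥0∞)))
  have sqrt_sq (a : ℝ≥0∞) : (a ^ (1 / 2 : ℝ)) ^ 2 = a := by
    rw [← ENNReal.rpow_natCast, ← ENNReal.rpow_mul]; norm_num
  simp only [Pi.mul_apply, mul_one, one_pow, lintegral_one, ENNReal.rpow_ofNat] at holder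
  calc (∫⁻ x, f x ∂μ) ^ 2 ≤ ((∫⁻ x, f x ^ 2 ∂μ) ^ (1 / 2 : ℝ) * μ univ ^ (1 / 2 : ℝ)) ^ 2 := by
        gcongr
    _ = μ univ * ∫⁻ x, f x ^ 2 ∂μ := by rw [mul_pow, sqrt_sq, sqrt_sq, mul_comm]

lemma enorm_sub_sq_add_two_mul {a b : ℝ} (ha : 0 ≤ a) (hb : 0 ≤ b) :
    ‖a - b‖ₑ ^ 2 + 2 * (‖a‖ₑ * ‖b‖ₑ) = ‖a‖ₑ ^ 2 + ‖b‖ₑ ^ 2 := by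
  have enorm_sq (x : ℝ) : ‖x‖ₑ ^ 2 = ENNReal.ofReal (x ^ 2) := by
    rw [Real.enorm_eq_ofReal_abs, ← ENNReal.ofReal_pow (abs_nonneg x), sq_abs]
  rw [enorm_sq, enorm_sq, enorm_sq, Real.enorm_of_nonneg ha, Real.enorm_of_nonneg hb,
    ← ENNReal.ofReal_mul ha, ← ENNReal.ofReal_ofNat 2, ← ENNReal.ofReal_mul zero_le_two,
    ← ENNReal.ofReal_add (sq_nonneg _) (by positivity),
    ← ENNReal.ofReal_add (sq_nonneg _) (sq_nonneg _)]
  ring_nf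

lemma lintegral_enorm_sub_sq_add_two_mul {α : Type*} [MeasurableSpace α] {μ : Measure α}
    {f g : α → ℝ} (hf : Measurable f) (hg : Measurable g) (hf0 : ∀ x, 0 ≤ f x)
    (hg0 : ∀ x, 0 ≤ g x) :
    (∫⁻ x, ‖f x - g x‖ₑ ^ 2 ∂μ) + 2 * ∫⁻ x, ‖f x‖ₑ * ‖g x‖ₑ ∂μ =
      (∫⁻ x, ‖f x‖ₑ ^ 2 ∂μ) + ∫⁻ x, ‖g x‖ₑ ^ 2 ∂μ := by
  rw [← lintegral_const_mul _ (by fun_prop), ← lintegral_add_left (by fun_prop),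
    ← lintegral_add_left (by fun_prop)]
  exact lintegral_congr fun x => enorm_sub_sq_add_two_mul (hf0 x) (hg0 x)

section Rearrangement

variable {α : Type*} [MeasurableSpace α] {μ : Measure α} {f g : α → ℝ} {M N : ℝ}

/-- The distribution function of `|f|`. -/
def distribFun (μ : Measure α) (f : α → ℝ) (t : ℝ) : ℝ≥0∞ := μ {x | t < |f x|}

/-- The symmetric decreasing rearrangement of `|f|`: the even function on the line, decreasing in
`|x|`, whose superlevel sets are intervals of the same measure as those of `|f|`. If `f` is
unbounded, the supremum may be the junk value `0`. -/
def symmRearr (μ : Measure α) (f : α → ℝ) (x : ℝ) : ℝ :=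
  sSup {t | 0 ≤ t ∧ ENNReal.ofReal (2 * |x|) < distribFun μ f t}

lemma distribFun_antitone (μ : Measure α) (f : α → ℝ) : Antitone (distribFun μ f) :=
  fun _ _ hst => measure_mono fun _ hx => lt_of_le_of_lt hst hx

lemma exists_gt_lt_distribFun {t : ℝ} {m : ℝ≥0∞} (h : m < distribFun μ f t) :
    ∃ s > t, m < distribFun μ f s := by
  obtain ⟨u, hu, htu, hlim⟩ := exists_seq_strictAnti_tendsto t
  have superlevel_eq : {x | t < |f x|} = ⋃ n, {x | u n < |f x|} := by
    ext x
    simp only [mem_iUnion]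
    exact ⟨fun hx => (hlim.eventually_lt_const hx).exists, fun ⟨n, hn⟩ => (htu n).trans hn⟩
  have superlevel_mono : Monotone fun n => {x | u n < |f x|} :=
    fun m n hmn x hx => (hu.antitone hmn).trans_lt hx
  rw [distribFun, superlevel_eq, superlevel_mono.measure_iUnion] at h
  obtain ⟨n, hn⟩ := lt_iSup_iff.1 h
  exact ⟨u n, htu n, hn⟩

lemma distribFun_eq_zero {t : ℝ} (hf : ∀ x, |f x| ≤ t) : distribFun μ f t = 0 := by
  simp [distribFun, not_lt.2 (hf _)]

lemma symmRearr_nonneg (μ : Measure α) (f : α → ℝ) (x : ℝ) : 0 ≤ symmRearr μ f x :=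
  Real.sSup_nonneg fun _ ht => ht.1

lemma lt_symmRearr_iff (hM : ∀ x, |f x| ≤ M) {t : ℝ} (ht : 0 ≤ t) {x : ℝ} :
    t < symmRearr μ f x ↔ ENNReal.ofReal (2 * |x|) < distribFun μ f t := by
  constructor
  · intro h
    have nonempty : {t | 0 ≤ t ∧ ENNReal.ofReal (2 * |x|) < distribFun μ f t}.Nonempty := by
      by_contra hempty
      rw [symmRearr, not_nonempty_iff_eq_empty.1 hempty, Real.sSup_empty] at h
      exact h.not_ge ht
    obtain ⟨s, hs, hts⟩ := exists_lt_of_lt_csSup nonempty h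
    exact hs.2.trans_le (distribFun_antitone μ f hts.le)
  · intro h
    have bddAbove : BddAbove {t | 0 ≤ t ∧ ENNReal.ofReal (2 * |x|) < distribFun μ f t} := by
      refine ⟨M, fun s hs => ?_⟩
      by_contra! hMs
      exact not_lt_zero (distribFun_eq_zero (μ := μ) (fun y => (hM y).trans hMs.le) ▸ hs.2)
    obtain ⟨s, hts, hs⟩ := exists_gt_lt_distribFun h
    exact hts.trans_le (le_csSup bddAbove ⟨ht.trans hts.le, hs⟩)

lemma symmRearr_le (hM : ∀ x, |f x| ≤ M) (hM0 : 0 ≤ M) (x : ℝ) : symmRearr μ f x ≤ M := by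
  rw [← not_lt, lt_symmRearr_iff hM hM0, distribFun_eq_zero hM]
  exact not_lt_zero

lemma symmRearr_congr_abs {x y : ℝ} (h : |x| = |y|) : symmRearr μ f x = symmRearr μ f y := by
  simp [symmRearr, h]

lemma symmRearr_le_of_abs_le (hM : ∀ x, |f x| ≤ M) {x y : ℝ} (h : |x| ≤ |y|) :
    symmRearr μ f y ≤ symmRearr μ f x := by
  by_contra! hlt
  rw [lt_symmRearr_iff hM (symmRearr_nonneg μ f x)] at hlt
  exact lt_irrefl _ ((lt_symmRearr_iff hM (symmRearr_nonneg μ f x)).2 (hlt.trans_le' (by gcongr)))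

lemma measurable_symmRearr (hM : ∀ x, |f x| ≤ M) : Measurable (symmRearr μ f) := by
  refine measurable_of_Ioi fun t => ?_
  rcases lt_or_ge t 0 with ht | ht
  · convert MeasurableSet.univ
    exact eq_univ_of_forall fun x => ht.trans_le (symmRearr_nonneg μ f x)
  · have preimage_eq : symmRearr μ f ⁻¹' Ioi t =
        {x | ENNReal.ofReal (2 * |x|) < distribFun μ f t} := ext fun x => lt_symmRearr_iff hM ht
    rw [preimage_eq]
    exact measurableSet_lt (by fun_prop) measurable_const

lemma volume_setOf_ofReal_two_mul_abs_lt (m : ℝ≥0∞) :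
    volume {x : ℝ | ENNReal.ofReal (2 * |x|) < m} = m := by
  induction m using ENNReal.recTopCoe with
  | top => simp only [ENNReal.ofReal_lt_top, ofPred_true, Real.volume_univ]
  | coe m =>
    have eq_Ioo : {x : ℝ | ENNReal.ofReal (2 * |x|) < (m : ℝ≥0∞)} = Ioo (-(m / 2 : ℝ)) (m / 2) := by
      ext x
      rw [mem_ofPred_eq, ← ENNReal.ofReal_coe_nnreal,
        ENNReal.ofReal_lt_ofReal_iff_of_nonneg (by positivity), mem_Ioo, ← abs_lt,
        lt_div_iff₀' two_pos]
    rw [eq_Ioo, Real.volume_Ioo, ← ENNReal.ofReal_coe_nnreal]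
    ring_nf

lemma lintegral_ofReal_mul_ofReal_eq [SFinite μ] (hf : Measurable f) (hg : Measurable g) :
    ∫⁻ x, ENNReal.ofReal (f x) * ENNReal.ofReal (g x) ∂μ =
      ∫⁻ p in Ioi (0 : ℝ) ×ˢ Ioi (0 : ℝ), μ {x | p.1 < f x ∧ p.2 < g x} := by
  let W : Set (α × ℝ × ℝ) := {z | z.2.1 < f z.1 ∧ z.2.2 < g z.1}
  have hW : MeasurableSet W :=
    (measurableSet_lt measurable_snd.fst (hf.comp measurable_fst)).inter
      (measurableSet_lt measurable_snd.snd (hg.comp measurable_fst))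
  have fubini := (Measure.prod_apply (μ := μ)
    (ν := volume.restrict (Ioi (0 : ℝ) ×ˢ Ioi (0 : ℝ))) hW).symm.trans (Measure.prod_apply_symm hW)
  refine Eq.trans (lintegral_congr fun x => ?_) fubini
  have section_inter : Prod.mk x ⁻¹' W ∩ Ioi (0 : ℝ) ×ˢ Ioi (0 : ℝ) =
      Ioo 0 (f x) ×ˢ Ioo 0 (g x) := by
    ext p
    simp only [W, mem_inter_iff, mem_preimage, mem_ofPred_eq, mem_prod, mem_Ioi, mem_Ioo]
    tauto
  rw [Measure.restrict_apply (measurable_prodMk_left hW), section_inter, Measure.volume_eq_prod,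
    Measure.prod_prod, Real.volume_Ioo, Real.volume_Ioo, sub_zero, sub_zero]

lemma volume_setOf_lt_symmRearr_and (hM : ∀ x, |f x| ≤ M) (hN : ∀ x, |g x| ≤ N) {s t : ℝ}
    (hs : 0 ≤ s) (ht : 0 ≤ t) :
    volume {x | s < symmRearr μ f x ∧ t < symmRearr μ g x} =
      min (distribFun μ f s) (distribFun μ g t) := by
  rw [← volume_setOf_ofReal_two_mul_abs_lt (min (distribFun μ f s) (distribFun μ g t))]
  simp only [lt_symmRearr_iff hM hs, lt_symmRearr_iff hN ht, lt_min_iff]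

lemma lintegral_enorm_mul_le_symmRearr [SFinite μ] (hM : ∀ x, |f x| ≤ M) (hN : ∀ x, |g x| ≤ N)
    (hf : Measurable f) (hg : Measurable g) :
    ∫⁻ x, ‖f x‖ₑ * ‖g x‖ₑ ∂μ ≤ ∫⁻ x, ‖symmRearr μ f x‖ₑ * ‖symmRearr μ g x‖ₑ := by
  simp only [Real.enorm_of_nonneg (symmRearr_nonneg μ _ _), Real.enorm_eq_ofReal_abs]
  rw [lintegral_ofReal_mul_ofReal_eq (f := (|f ·|)) (g := (|g ·|)) (by fun_prop) (by fun_prop),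
    lintegral_ofReal_mul_ofReal_eq (measurable_symmRearr hM) (measurable_symmRearr hN)]
  refine setLIntegral_mono' (measurableSet_Ioi.prod measurableSet_Ioi) fun p hp => ?_
  rw [volume_setOf_lt_symmRearr_and hM hN hp.1.le hp.2.le]
  exact le_min (measure_mono fun x hx => hx.1) (measure_mono fun x hx => hx.2)

lemma lintegral_enorm_symmRearr_sq [SFinite μ] (hM : ∀ x, |f x| ≤ M) (hf : Measurable f) :
    ∫⁻ x, ‖symmRearr μ f x‖ₑ ^ 2 = ∫⁻ x, ‖f x‖ₑ ^ 2 ∂μ := by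
  simp only [sq, Real.enorm_of_nonneg (symmRearr_nonneg μ _ _), Real.enorm_eq_ofReal_abs]
  rw [lintegral_ofReal_mul_ofReal_eq (f := (|f ·|)) (g := (|f ·|)) (by fun_prop) (by fun_prop),
    lintegral_ofReal_mul_ofReal_eq (measurable_symmRearr hM) (measurable_symmRearr hM)]
  refine setLIntegral_congr_fun (measurableSet_Ioi.prod measurableSet_Ioi) fun p hp => ?_
  rw [volume_setOf_lt_symmRearr_and hM hM hp.1.le hp.2.le, ← (distribFun_antitone μ f).map_max]
  simp only [distribFun, max_lt_iff]

lemma lintegral_enorm_symmRearr_sub_sq_le [SFinite μ] (hM : ∀ x, |f x| ≤ M) (hN : ∀ x, |g x| ≤ N)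
    (hf : Measurable f) (hg : Measurable g)
    (hf2 : ∫⁻ x, ‖f x‖ₑ ^ 2 ∂μ ≠ ∞) (hg2 : ∫⁻ x, ‖g x‖ₑ ^ 2 ∂μ ≠ ∞) :
    ∫⁻ x, ‖symmRearr μ f x - symmRearr μ g x‖ₑ ^ 2 ≤ ∫⁻ x, ‖f x - g x‖ₑ ^ 2 ∂μ := by
  have expand_rearr := lintegral_enorm_sub_sq_add_two_mul (μ := volume)
    (measurable_symmRearr (μ := μ) hM) (measurable_symmRearr (μ := μ) hN)
    (symmRearr_nonneg μ f) (symmRearr_nonneg μ g)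
  rw [lintegral_enorm_symmRearr_sq hM hf, lintegral_enorm_symmRearr_sq hN hg] at expand_rearr
  have expand_abs := lintegral_enorm_sub_sq_add_two_mul (μ := μ) (f := (|f ·|)) (g := (|g ·|))
    (by fun_prop) (by fun_prop) (fun x => abs_nonneg (f x)) (fun x => abs_nonneg (g x))
  simp only [enorm_abs] at expand_abs
  have finite : 2 * ∫⁻ x, ‖symmRearr μ f x‖ₑ * ‖symmRearr μ g x‖ₑ ≠ ∞ :=
    ne_top_of_le_ne_top (expand_rearr ▸ ENNReal.add_ne_top.2 ⟨hf2, hg2⟩) le_add_self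
  have rearr_le_abs : ∫⁻ x, ‖symmRearr μ f x - symmRearr μ g x‖ₑ ^ 2 ≤
      ∫⁻ x, ‖|f x| - |g x|‖ₑ ^ 2 ∂μ := by
    refine (ENNReal.add_le_add_iff_right finite).1 ?_
    rw [expand_rearr, ← expand_abs]
    gcongr
    exact lintegral_enorm_mul_le_symmRearr hM hN hf hg
  refine rearr_le_abs.trans (lintegral_mono fun x => ?_)
  gcongr
  exact enorm_le_iff_norm_le.2 (abs_abs_sub_abs_le (f x) (g x))

end Rearrangement

/-! ### The Pólya–Szegő inequality on the line -/

lemma lintegral_setLIntegral_prodMk_preimage {α β : Type*} [MeasurableSpace α]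
    [MeasurableSpace β] {μ : Measure α} {ν : Measure β} [SFinite μ] [SFinite ν] {W : Set (α × β)}
    (hW : MeasurableSet W) {g : β → ℝ≥0∞} (hg : Measurable g) :
    ∫⁻ x, ∫⁻ y in Prod.mk x ⁻¹' W, g y ∂ν ∂μ = ∫⁻ y, g y * μ ((fun x => (x, y)) ⁻¹' W) ∂ν := by
  simp_rw [← withDensity_apply g (measurable_prodMk_left hW)]
  rw [← Measure.prod_apply hW, Measure.prod_apply_symm hW,
    lintegral_withDensity_eq_lintegral_mul _ hg (measurable_measure_prodMk_right hW)]
  rfl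

section PolyaSzego

variable {f : ℝ → ℝ} {a t M : ℝ}

lemma exists_crossing {g : ℝ → ℝ} (hg : Continuous g) {x₁ x₂ : ℝ} (hx : x₁ ≤ x₂)
    (h₁ : g x₁ ≤ a) (h₂ : t ≤ g x₂) :
    ∃ l₁ l₂, x₁ ≤ l₁ ∧ l₁ ≤ l₂ ∧ l₂ ≤ x₂ ∧ g l₁ ≤ a ∧ t ≤ g l₂ ∧
      ∀ x ∈ Ioo l₁ l₂, a < g x ∧ g x < t := by
  have isCompact_left : IsCompact (Icc x₁ x₂ ∩ g ⁻¹' Iic a) :=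
    isCompact_Icc.inter_right (isClosed_Iic.preimage hg)
  obtain ⟨l₁, hl₁, l₁_max⟩ := isCompact_left.exists_isGreatest ⟨x₁, ⟨le_rfl, hx⟩, h₁⟩
  have isCompact_right : IsCompact (Icc l₁ x₂ ∩ g ⁻¹' Ici t) :=
    isCompact_Icc.inter_right (isClosed_Ici.preimage hg)
  obtain ⟨l₂, hl₂, l₂_min⟩ := isCompact_right.exists_isLeast ⟨x₂, ⟨hl₁.1.2, le_rfl⟩, h₂⟩
  refine ⟨l₁, l₂, hl₁.1.1, hl₂.1.1, hl₂.1.2, hl₁.2, hl₂.2, fun x hx => ⟨?_, ?_⟩⟩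
  · by_contra! h
    exact hx.1.not_ge (l₁_max ⟨⟨hl₁.1.1.trans hx.1.le, hx.2.le.trans hl₂.1.2⟩, h⟩)
  · by_contra! h
    exact hx.2.not_ge (l₂_min ⟨⟨hx.1.le, hx.2.le.trans hl₂.1.2⟩, h⟩)

lemma ofReal_sub_le_setLIntegral_deriv (hf : ContDiff ℝ 1 f) {x₁ x₂ : ℝ} (hx : x₁ ≤ x₂)
    (h₁ : |f x₁| ≤ a) (h₂ : t ≤ |f x₂|) :
    ENNReal.ofReal (t - a) ≤
      ∫⁻ x in Icc x₁ x₂ ∩ {x | a < |f x| ∧ |f x| < t}, ‖deriv f x‖ₑ := by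
  obtain ⟨l₁, l₂, hxl₁, hl, hlx₂, hl₁, hl₂, between⟩ :=
    exists_crossing hf.continuous.abs hx h₁ h₂
  calc ENNReal.ofReal (t - a) ≤ ENNReal.ofReal ‖f l₂ - f l₁‖ := by
        refine ENNReal.ofReal_le_ofReal ?_
        rw [Real.norm_eq_abs]
        linarith [abs_sub_abs_le_abs_sub (f l₂) (f l₁)]
    _ = ‖f l₂ - f l₁‖ₑ := ofReal_norm _
    _ ≤ ∫⁻ x in Icc l₁ l₂, ‖deriv f x‖ₑ :=
        enorm_sub_le_lintegral_deriv_of_contDiffOn_Icc hf.contDiffOn hl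
    _ = ∫⁻ x in Ioo l₁ l₂, ‖deriv f x‖ₑ := by rw [restrict_Ioo_eq_restrict_Icc]
    _ ≤ ∫⁻ x in Icc x₁ x₂ ∩ {x | a < |f x| ∧ |f x| < t}, ‖deriv f x‖ₑ :=
        lintegral_mono_set fun x hx =>
          ⟨⟨hxl₁.trans hx.1.le, hx.2.le.trans hlx₂⟩, between x hx⟩

lemma ofReal_sub_le_setLIntegral_deriv' (hf : ContDiff ℝ 1 f) {x₁ x₂ : ℝ} (hx : x₁ ≤ x₂)
    (h₁ : t ≤ |f x₁|) (h₂ : |f x₂| ≤ a) :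
    ENNReal.ofReal (t - a) ≤
      ∫⁻ x in Icc x₁ x₂ ∩ {x | a < |f x| ∧ |f x| < t}, ‖deriv f x‖ₑ := by
  have reflected := ofReal_sub_le_setLIntegral_deriv (hf.comp contDiff_neg) (neg_le_neg hx)
    (a := a) (t := t) (by simpa using h₂) (by simpa using h₁)
  rw [← (Measure.measurePreserving_neg volume).setLIntegral_comp_preimage_emb
    (MeasurableEquiv.neg ℝ).measurableEmbedding]
  refine reflected.trans_eq ?_
  simp only [Function.comp_def, deriv_comp_neg, enorm_neg]
  congr 2
  ext x
  simp only [mem_inter_iff, mem_preimage, mem_Icc, mem_ofPred_eq, neg_le, le_neg, and_comm]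

lemma two_mul_ofReal_sub_le_setLIntegral_deriv (hf : ContDiff ℝ 1 f) (hc : HasCompactSupport f)
    (ha : 0 ≤ a) {x₀ : ℝ} (hx₀ : t ≤ |f x₀|) :
    2 * ENNReal.ofReal (t - a) ≤ ∫⁻ x in {x | a < |f x| ∧ |f x| < t}, ‖deriv f x‖ₑ := by
  set S := {x | a < |f x| ∧ |f x| < t}
  have f_eq_zero := hasCompactSupport_iff_eventuallyEq.1 hc
  rw [coclosedCompact_eq_cocompact, cocompact_eq_atBot_atTop, EventuallyEq, eventually_sup]
    at f_eq_zero
  obtain ⟨x₁, hx₁, hx₁₀⟩ := (f_eq_zero.1.and (eventually_le_atBot x₀)).exists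
  obtain ⟨x₂, hx₂, hx₀₂⟩ := (f_eq_zero.2.and (eventually_ge_atTop x₀)).exists
  have hS : MeasurableSet S :=
    (measurableSet_lt measurable_const hf.continuous.measurable.abs).inter
      (measurableSet_lt hf.continuous.measurable.abs measurable_const)
  have disjoint : Disjoint (Icc x₁ x₀ ∩ S) (Icc x₀ x₂ ∩ S) := by
    rw [Set.disjoint_left]
    rintro x ⟨⟨-, hxx₀⟩, -, hxt⟩ ⟨⟨hx₀x, -⟩, -⟩
    exact hxt.not_ge (le_antisymm hxx₀ hx₀x ▸ hx₀)
  calc 2 * ENNReal.ofReal (t - a)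
      ≤ (∫⁻ x in Icc x₁ x₀ ∩ S, ‖deriv f x‖ₑ) + ∫⁻ x in Icc x₀ x₂ ∩ S, ‖deriv f x‖ₑ := by
        rw [two_mul]
        exact add_le_add
          (ofReal_sub_le_setLIntegral_deriv hf hx₁₀ (by simpa [hx₁] using ha) hx₀)
          (ofReal_sub_le_setLIntegral_deriv' hf hx₀₂ hx₀ (by simpa [hx₂] using ha))
    _ = ∫⁻ x in Icc x₁ x₀ ∩ S ∪ Icc x₀ x₂ ∩ S, ‖deriv f x‖ₑ :=
        (lintegral_union (measurableSet_Icc.inter hS) disjoint).symm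
    _ ≤ ∫⁻ x in S, ‖deriv f x‖ₑ :=
        lintegral_mono_set (union_subset inter_subset_right inter_subset_right)

lemma measure_setOf_symmRearr_lt_abs_lt_le {α : Type*} [MeasurableSpace α] {μ : Measure α}
    {f : α → ℝ} (hM : ∀ x, |f x| ≤ M) (hf : Measurable f) (x₁ x₂ : ℝ) :
    μ {x | symmRearr μ f x₂ < |f x| ∧ |f x| < symmRearr μ f x₁} ≤
      ENNReal.ofReal (2 * (|x₂| - |x₁|)) := by
  set a := symmRearr μ f x₂
  set b := symmRearr μ f x₁
  rcases le_or_gt b a with hba | hab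
  · have empty : {x | a < |f x| ∧ |f x| < b} = ∅ :=
      eq_empty_of_forall_notMem fun x hx => (hx.1.trans hx.2).not_ge hba
    simp [empty]
  have ha : 0 ≤ a := symmRearr_nonneg μ f x₂
  obtain ⟨t, t_mono, ht, t_lim⟩ := exists_seq_strictMono_tendsto' hab
  have eq_iUnion : {x | a < |f x| ∧ |f x| < b} = ⋃ n, {x | a < |f x| ∧ |f x| ≤ t n} := by
    ext x
    simp only [mem_iUnion, mem_ofPred_eq, exists_and_left]
    refine and_congr_right fun _ => ⟨fun h => ?_, fun ⟨n, hn⟩ => hn.trans_lt (ht n).2⟩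
    exact ((t_lim.eventually_const_lt h).mono fun n => le_of_lt).exists
  have monotone : Monotone fun n => {x | a < |f x| ∧ |f x| ≤ t n} :=
    fun m n hmn x hx => ⟨hx.1, hx.2.trans (t_mono.monotone hmn)⟩
  rw [eq_iUnion, monotone.measure_iUnion, mul_sub, ENNReal.ofReal_sub _ (by positivity)]
  refine iSup_le fun n => ENNReal.le_sub_of_add_le_right ENNReal.ofReal_ne_top ?_
  calc μ {x | a < |f x| ∧ |f x| ≤ t n} + ENNReal.ofReal (2 * |x₁|)
      ≤ μ {x | a < |f x| ∧ |f x| ≤ t n} + distribFun μ f (t n) := by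
        gcongr
        exact ((lt_symmRearr_iff hM (ha.trans (ht n).1.le)).1 (ht n).2).le
    _ = μ ({x | a < |f x| ∧ |f x| ≤ t n} ∪ {x | t n < |f x|}) :=
        (measure_union (Set.disjoint_left.2 fun x hx hx' => hx.2.not_gt hx')
          (measurableSet_lt measurable_const hf.abs)).symm
    _ ≤ distribFun μ f a :=
        measure_mono (union_subset (fun x hx => hx.1) fun x hx => (ht n).1.trans hx)
    _ ≤ ENNReal.ofReal (2 * |x₂|) := not_lt.1 fun h => lt_irrefl a ((lt_symmRearr_iff hM ha).2 h)

lemma enorm_symmRearr_sub_sq_le (hM : ∀ x, |f x| ≤ M) (hf : ContDiff ℝ 1 f)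
    (hc : HasCompactSupport f) {x₁ x₂ : ℝ} (hx : |x₁| ≤ |x₂|) :
    ‖symmRearr volume f x₁ - symmRearr volume f x₂‖ₑ ^ 2 ≤
      ENNReal.ofReal ((|x₂| - |x₁|) / 2) *
        ∫⁻ τ in {τ | symmRearr volume f x₂ < |f τ| ∧ |f τ| < symmRearr volume f x₁},
          ‖deriv f τ‖ₑ ^ 2 := by
  set a := symmRearr volume f x₂
  set b := symmRearr volume f x₁
  set S := {τ | a < |f τ| ∧ |f τ| < b}
  have hab : a ≤ b := symmRearr_le_of_abs_le hM hx
  obtain ⟨x₀, hx₀⟩ := hf.continuous.abs.exists_forall_ge_of_hasCompactSupport hc.abs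
  have b_le : b ≤ |f x₀| := symmRearr_le hx₀ (abs_nonneg _) x₁
  have four_mul : 4 * ‖b - a‖ₑ ^ 2 ≤
      4 * (ENNReal.ofReal ((|x₂| - |x₁|) / 2) * ∫⁻ τ in S, ‖deriv f τ‖ₑ ^ 2) := by
    calc 4 * ‖b - a‖ₑ ^ 2 = (2 * ENNReal.ofReal (b - a)) ^ 2 := by
          rw [Real.enorm_of_nonneg (sub_nonneg.2 hab), mul_pow]
          norm_num
      _ ≤ (∫⁻ τ in S, ‖deriv f τ‖ₑ) ^ 2 := by
          gcongr
          exact two_mul_ofReal_sub_le_setLIntegral_deriv hf hc (symmRearr_nonneg volume f x₂) b_le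
      _ ≤ volume S * ∫⁻ τ in S, ‖deriv f τ‖ₑ ^ 2 := by
          have := sq_lintegral_le_measure_univ_mul (μ := volume.restrict S)
            (hf.continuous_deriv le_rfl).enorm.aemeasurable
          rwa [Measure.restrict_apply_univ] at this
      _ ≤ ENNReal.ofReal (2 * (|x₂| - |x₁|)) * ∫⁻ τ in S, ‖deriv f τ‖ₑ ^ 2 := by
          gcongr
          exact measure_setOf_symmRearr_lt_abs_lt_le hM hf.continuous.measurable x₁ x₂
      _ = _ := by
          rw [← mul_assoc, ← ENNReal.ofReal_ofNat 4, ← ENNReal.ofReal_mul (by norm_num)]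
          ring_nf
  exact (ENNReal.mul_le_mul_iff_right (by norm_num) (by norm_num)).1 four_mul

lemma volume_shell_le (m : ℝ≥0∞) {h : ℝ} (hh : 0 ≤ h) :
    volume {x : ℝ | ENNReal.ofReal (2 * |(|x| - h / 2)|) < m ∧
      m ≤ ENNReal.ofReal (2 * |(|x| + h / 2)|)} ≤ ENNReal.ofReal (2 * h) := by
  induction m using ENNReal.recTopCoe with
  | top => simp only [top_le_iff, ENNReal.ofReal_ne_top, and_false, ofPred_false, measure_empty,
      zero_le]
  | coe m =>
    have subset_Icc_union : {x : ℝ | ENNReal.ofReal (2 * |(|x| - h / 2)|) < (m : ℝ≥0∞) ∧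
        (m : ℝ≥0∞) ≤ ENNReal.ofReal (2 * |(|x| + h / 2)|)} ⊆
          Icc (m / 2 - h / 2 : ℝ) (m / 2 + h / 2) ∪
          Icc (-(m / 2 + h / 2) : ℝ) (-(m / 2 - h / 2)) := by
      rintro x ⟨hlt, hle⟩
      rw [← ENNReal.ofReal_coe_nnreal,
        ENNReal.ofReal_lt_ofReal_iff_of_nonneg (by positivity)] at hlt
      rw [← ENNReal.ofReal_coe_nnreal, ENNReal.ofReal_le_ofReal_iff (by positivity),
        abs_of_nonneg (by positivity)] at hle
      have abs_x_lt := (abs_lt.1 (by linarith : |(|x| - h / 2)| < m / 2)).2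
      rcases abs_cases x with ⟨hx, -⟩ | ⟨hx, -⟩
      · left; constructor <;> linarith
      · right; constructor <;> linarith
    refine (measure_mono subset_Icc_union).trans ((measure_union_le _ _).trans ?_)
    rw [Real.volume_Icc, Real.volume_Icc, ← ENNReal.ofReal_add (by linarith) (by linarith)]
    exact ENNReal.ofReal_le_ofReal (by linarith)

lemma enorm_symmRearr_add_sub_symmRearr_sub {α : Type*} [MeasurableSpace α] (μ : Measure α)
    (f : α → ℝ) (x h : ℝ) :
    ‖symmRearr μ f (x + h) - symmRearr μ f (x - h)‖ₑ =
      ‖symmRearr μ f (|x| - |h|) - symmRearr μ f (|x| + |h|)‖ₑ := by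
  have even (y : ℝ) : symmRearr μ f (-y) = symmRearr μ f y := symmRearr_congr_abs (abs_neg y)
  rcases abs_choice x with hx | hx <;> rcases abs_choice h with hh | hh <;> rw [hx, hh]
  · exact enorm_sub_rev _ _
  · ring_nf
  · rw [← even (-x - h), ← even (-x + h)]
    ring_nf
  · rw [← even (-x - -h), ← even (-x + -h), enorm_sub_rev]
    ring_nf

lemma enorm_symmRearr_half_shift_sq_le (hM : ∀ x, |f x| ≤ M) (hf : ContDiff ℝ 1 f)
    (hc : HasCompactSupport f) (x h : ℝ) :
    ‖symmRearr volume f (x + h / 2) - symmRearr volume f (x - h / 2)‖ₑ ^ 2 ≤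
      ENNReal.ofReal (|h| / 2) *
        ∫⁻ τ in {τ | ENNReal.ofReal (2 * |(|x| - |h| / 2)|) < distribFun volume f |f τ| ∧
          distribFun volume f |f τ| ≤ ENNReal.ofReal (2 * |(|x| + |h| / 2)|)},
          ‖deriv f τ‖ₑ ^ 2 := by
  have add_nonneg : 0 ≤ |x| + |h| / 2 := by positivity
  have abs_le_abs : |(|x| - |h| / 2)| ≤ |(|x| + |h| / 2)| := by
    rw [abs_of_nonneg add_nonneg, abs_le]
    constructor <;> linarith [abs_nonneg x, abs_nonneg h]
  rw [enorm_symmRearr_add_sub_symmRearr_sub, abs_div, abs_two]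
  refine (enorm_symmRearr_sub_sq_le hM hf hc abs_le_abs).trans ?_
  gcongr ENNReal.ofReal (?_ / 2) * ?_
  · rw [abs_of_nonneg add_nonneg]
    linarith [le_abs_self (|x| - |h| / 2)]
  · refine lintegral_mono_set fun τ hτ => ⟨?_, ?_⟩
    · exact (lt_symmRearr_iff hM (abs_nonneg _)).1 hτ.2
    · exact not_lt.1 fun hlt => hτ.1.not_gt ((lt_symmRearr_iff hM (abs_nonneg _)).2 hlt)

lemma lintegral_enorm_symmRearr_shift_sq_le (hM : ∀ x, |f x| ≤ M) (hf : ContDiff ℝ 1 f)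
    (hc : HasCompactSupport f) (h : ℝ) :
    ∫⁻ x, ‖symmRearr volume f (x + h) - symmRearr volume f x‖ₑ ^ 2 ≤
      ‖h‖ₑ ^ 2 * ∫⁻ x, ‖deriv f x‖ₑ ^ 2 := by
  let D τ := distribFun volume f |f τ|
  have hD : Measurable D :=
    (distribFun_antitone volume f).measurable.comp hf.continuous.measurable.abs
  have hd : Measurable fun τ => ‖deriv f τ‖ₑ ^ 2 := by fun_prop
  let W : Set (ℝ × ℝ) := {z | ENNReal.ofReal (2 * |(|z.1| - |h| / 2)|) < D z.2 ∧
    D z.2 ≤ ENNReal.ofReal (2 * |(|z.1| + |h| / 2)|)}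
  have hW : MeasurableSet W :=
    (measurableSet_lt (by fun_prop) (hD.comp measurable_snd)).inter
      (measurableSet_le (hD.comp measurable_snd) (by fun_prop))
  calc ∫⁻ x, ‖symmRearr volume f (x + h) - symmRearr volume f x‖ₑ ^ 2
      = ∫⁻ x, ‖symmRearr volume f (x + h / 2) - symmRearr volume f (x - h / 2)‖ₑ ^ 2 := by
        rw [← lintegral_sub_right_eq_self _ (h / 2)]
        refine lintegral_congr fun x => ?_
        ring_nf
    _ ≤ ∫⁻ x, ENNReal.ofReal (|h| / 2) * ∫⁻ τ in Prod.mk x ⁻¹' W, ‖deriv f τ‖ₑ ^ 2 :=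
        lintegral_mono fun x => enorm_symmRearr_half_shift_sq_le hM hf hc x h
    _ = ENNReal.ofReal (|h| / 2) * ∫⁻ x, ∫⁻ τ in Prod.mk x ⁻¹' W, ‖deriv f τ‖ₑ ^ 2 :=
        lintegral_const_mul' _ _ ENNReal.ofReal_ne_top
    _ = ENNReal.ofReal (|h| / 2) *
          ∫⁻ τ, ‖deriv f τ‖ₑ ^ 2 * volume ((fun x => (x, τ)) ⁻¹' W) := by
        rw [lintegral_setLIntegral_prodMk_preimage hW hd]
    _ ≤ ENNReal.ofReal (|h| / 2) * ∫⁻ τ, ‖deriv f τ‖ₑ ^ 2 * ENNReal.ofReal (2 * |h|) := by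
        gcongr with τ
        exact volume_shell_le (D τ) (abs_nonneg h)
    _ = ‖h‖ₑ ^ 2 * ∫⁻ τ, ‖deriv f τ‖ₑ ^ 2 := by
        rw [lintegral_mul_const' _ _ ENNReal.ofReal_ne_top, mul_left_comm,
          ← ENNReal.ofReal_mul (by positivity), mul_comm, Real.enorm_eq_ofReal_abs,
          ← ENNReal.ofReal_pow (abs_nonneg h)]
        ring_nf

end PolyaSzego

/-! ### Poincaré inequalities from shift bounds -/

lemma lintegral_le_of_ae_tendsto {α : Type*} [MeasurableSpace α] {μ : Measure α}
    {F : ℕ → α → ℝ≥0∞} {G : α → ℝ≥0∞} {C : ℝ≥0∞} (hF : ∀ n, AEMeasurable (F n) μ)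
    (hlim : ∀ᵐ x ∂μ, Tendsto (F · x) atTop (𝓝 (G x))) (hC : ∀ᶠ n in atTop, ∫⁻ x, F n x ∂μ ≤ C) :
    ∫⁻ x, G x ∂μ ≤ C :=
  calc ∫⁻ x, G x ∂μ = ∫⁻ x, liminf (F · x) atTop ∂μ :=
        lintegral_congr_ae (hlim.mono fun _ hx => hx.liminf_eq.symm)
    _ ≤ liminf (fun n => ∫⁻ x, F n x ∂μ) atTop := lintegral_liminf_le' hF
    _ ≤ limsup (fun n => ∫⁻ x, F n x ∂μ) atTop := liminf_le_limsup
    _ ≤ C := limsup_le_of_le (h := hC)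

lemma lintegral_enorm_integral_sq_le {α β : Type*} [MeasurableSpace α] [MeasurableSpace β]
    {μ : Measure α} [SFinite μ] {ρ : Measure β} [IsProbabilityMeasure ρ] {G : α → β → ℝ}
    (hG : Measurable (Function.uncurry G)) {C : ℝ≥0∞}
    (hC : ∀ t, ∫⁻ z, ‖G z t‖ₑ ^ 2 ∂μ ≤ C) : ∫⁻ z, ‖∫ t, G z t ∂ρ‖ₑ ^ 2 ∂μ ≤ C :=
  calc ∫⁻ z, ‖∫ t, G z t ∂ρ‖ₑ ^ 2 ∂μ ≤ ∫⁻ z, (∫⁻ t, ‖G z t‖ₑ ∂ρ) ^ 2 ∂μ := by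
        gcongr with z
        exact enorm_integral_le_lintegral_enorm _
    _ ≤ ∫⁻ z, ∫⁻ t, ‖G z t‖ₑ ^ 2 ∂ρ ∂μ := by
        gcongr with z
        simpa using sq_lintegral_le_measure_univ_mul (μ := ρ)
          (hG.of_uncurry_left (x := z)).enorm.aemeasurable
    _ = ∫⁻ t, ∫⁻ z, ‖G z t‖ₑ ^ 2 ∂μ ∂ρ :=
        lintegral_lintegral_swap (hG.enorm.pow_const 2).aemeasurable
    _ ≤ ∫⁻ _, C ∂ρ := lintegral_mono hC
    _ = C := by simp

section Shift

variable {V : Type*} [NormedAddCommGroup V] [NormedSpace ℝ V]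

lemma enorm_shift_sub_sq_le {u : V → ℝ} (hu : ContDiff ℝ 1 u) (z e : V) :
    ‖u (z + e) - u z‖ₑ ^ 2 ≤ ∫⁻ s in Icc (0 : ℝ) 1, ‖fderiv ℝ u (z + s • e) e‖ₑ ^ 2 := by
  have line (s : ℝ) : HasDerivAt (fun s : ℝ => z + s • e) e s := by
    simpa using ((hasDerivAt_id s).smul_const e).const_add z
  have deriv_eq (s : ℝ) : deriv (fun s : ℝ => u (z + s • e)) s = fderiv ℝ u (z + s • e) e :=
    ((hu.differentiable one_ne_zero _).hasFDerivAt.comp_hasDerivAt s (line s)).deriv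
  have hd : Continuous fun s : ℝ => fderiv ℝ u (z + s • e) e :=
    ((hu.continuous_fderiv one_ne_zero).comp (by fun_prop)).clm_apply continuous_const
  have hu' : ContDiff ℝ 1 fun s : ℝ => u (z + s • e) := by fun_prop
  calc ‖u (z + e) - u z‖ₑ ^ 2 ≤ (∫⁻ s in Icc (0 : ℝ) 1, ‖fderiv ℝ u (z + s • e) e‖ₑ) ^ 2 := by
        gcongr
        simpa [deriv_eq] using
          enorm_sub_le_lintegral_deriv_of_contDiffOn_Icc hu'.contDiffOn zero_le_one
    _ ≤ ∫⁻ s in Icc (0 : ℝ) 1, ‖fderiv ℝ u (z + s • e) e‖ₑ ^ 2 := by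
        simpa using sq_lintegral_le_measure_univ_mul (μ := volume.restrict (Icc (0 : ℝ) 1))
          hd.enorm.aemeasurable

variable [MeasurableSpace V] [BorelSpace V] {μ : Measure V} {e : V} {C : ℝ≥0∞}

lemma lintegral_enorm_shift_sub_sq_le [SecondCountableTopology V] [SFinite μ]
    [μ.IsAddRightInvariant] {u : V → ℝ} (hu : ContDiff ℝ 1 u) (e : V) :
    ∫⁻ z, ‖u (z + e) - u z‖ₑ ^ 2 ∂μ ≤ ∫⁻ z, ‖fderiv ℝ u z e‖ₑ ^ 2 ∂μ := by
  have hd : Continuous fun p : V × ℝ => fderiv ℝ u (p.1 + p.2 • e) e :=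
    ((hu.continuous_fderiv one_ne_zero).comp (by fun_prop)).clm_apply continuous_const
  calc ∫⁻ z, ‖u (z + e) - u z‖ₑ ^ 2 ∂μ
      ≤ ∫⁻ z, (∫⁻ s in Icc (0 : ℝ) 1, ‖fderiv ℝ u (z + s • e) e‖ₑ ^ 2) ∂μ :=
        lintegral_mono fun z => enorm_shift_sub_sq_le hu z e
    _ = ∫⁻ s in Icc (0 : ℝ) 1, ∫⁻ z, ‖fderiv ℝ u (z + s • e) e‖ₑ ^ 2 ∂μ :=
        lintegral_lintegral_swap (hd.measurable.enorm.pow_const 2).aemeasurable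
    _ = ∫⁻ s in Icc (0 : ℝ) 1, ∫⁻ z, ‖fderiv ℝ u z e‖ₑ ^ 2 ∂μ :=
        lintegral_congr fun s =>
          lintegral_add_right_eq_self (fun z => ‖fderiv ℝ u z e‖ₑ ^ 2) (s • e)
    _ = ∫⁻ z, ‖fderiv ℝ u z e‖ₑ ^ 2 ∂μ := by simp

lemma lintegral_enorm_fderiv_sq_le_of_shift {u : V → ℝ} (hu : ContDiff ℝ 1 u)
    (hC : ∀ h : ℝ, ∫⁻ z, ‖u (z + h • e) - u z‖ₑ ^ 2 ∂μ ≤ ‖h‖ₑ ^ 2 * C) :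
    ∫⁻ z, ‖fderiv ℝ u z e‖ₑ ^ 2 ∂μ ≤ C := by
  have hu' := hu.continuous
  refine lintegral_le_of_ae_tendsto
    (F := fun n z => ‖(n : ℝ) • (u (z + (n : ℝ)⁻¹ • e) - u z)‖ₑ ^ 2)
    (fun n => by fun_prop) (ae_of_all _ fun z => ?_) ?_
  · exact ((ENNReal.continuous_pow 2).tendsto _).comp
      (((hu.differentiable one_ne_zero z).hasFDerivAt.lim_real e).comp
        tendsto_natCast_atTop_atTop).enorm
  · filter_upwards [eventually_ne_atTop 0] with n hn
    have hn' : (n : ℝ) ≠ 0 := by exact_mod_cast hn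
    calc ∫⁻ z, ‖(n : ℝ) • (u (z + (n : ℝ)⁻¹ • e) - u z)‖ₑ ^ 2 ∂μ
        = ‖(n : ℝ)‖ₑ ^ 2 * ∫⁻ z, ‖u (z + (n : ℝ)⁻¹ • e) - u z‖ₑ ^ 2 ∂μ := by
          simp only [enorm_smul, mul_pow]
          exact lintegral_const_mul' _ _ (by simp)
      _ ≤ ‖(n : ℝ)‖ₑ ^ 2 * (‖(n : ℝ)⁻¹‖ₑ ^ 2 * C) := by gcongr; exact hC _
      _ = C := by rw [← mul_assoc, ← mul_pow, ← enorm_mul, mul_inv_cancel₀ hn']; simp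

end Shift

section Mollify

variable {V : Type*} [NormedAddCommGroup V] [NormedSpace ℝ V] [FiniteDimensional ℝ V]
  [MeasurableSpace V] [BorelSpace V] {μ : Measure V} [μ.IsAddHaarMeasure] {w : V → ℝ}

/-- The convolution of `w` with the normalised bump function `φ`. -/
def mollify (μ : Measure V) (φ : ContDiffBump (0 : V)) (w : V → ℝ) : V → ℝ :=
  convolution (φ.normed μ) w (ContinuousLinearMap.lsmul ℝ ℝ) μ

lemma contDiff_mollify (φ : ContDiffBump (0 : V)) (hw : LocallyIntegrable w μ) :
    ContDiff ℝ (⊤ : ℕ∞) (mollify μ φ w) :=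
  φ.hasCompactSupport_normed.contDiff_convolution_left _ φ.contDiff_normed hw

lemma support_mollify_subset (φ : ContDiffBump (0 : V)) {K : Set V}
    (hwK : Function.support w ⊆ K) : Function.support (mollify μ φ w) ⊆ cthickening φ.rOut K := by
  intro z hz
  obtain ⟨t, ht, x, hx, rfl⟩ := support_convolution_subset _ hz
  rw [φ.support_normed_eq, mem_ball_zero_iff] at ht
  exact mem_cthickening_of_dist_le _ x _ _ (hwK hx) (by simpa using ht.le)

lemma lintegral_enorm_mollify_shift_sq_le (φ : ContDiffBump (0 : V)) (hwm : Measurable w)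
    (hw : LocallyIntegrable w μ) (e : V) :
    ∫⁻ z, ‖mollify μ φ w (z + e) - mollify μ φ w z‖ₑ ^ 2 ∂μ ≤
      ∫⁻ z, ‖w (z + e) - w z‖ₑ ^ 2 ∂μ := by
  let ρ := μ.withDensity fun t => ENNReal.ofReal (φ.normed μ t)
  have hφ : Measurable fun t => ENNReal.ofReal (φ.normed μ t) :=
    φ.continuous_normed.measurable.ennreal_ofReal
  have : IsProbabilityMeasure ρ := ⟨by
    rw [withDensity_apply _ MeasurableSet.univ, Measure.restrict_univ,
      ← ofReal_integral_eq_lintegral_ofReal φ.integrable_normed (ae_of_all _ φ.nonneg_normed),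
      φ.integral_normed, ENNReal.ofReal_one]⟩
  have mollify_eq (z : V) : mollify μ φ w z = ∫ t, w (z - t) ∂ρ := by
    rw [integral_withDensity_eq_integral_toReal_smul hφ (by simp)]
    simp only [ENNReal.toReal_ofReal (φ.nonneg_normed _)]
    rfl
  have integrable_sub (z : V) : Integrable (fun t => w (z - t)) ρ := by
    rw [integrable_withDensity_iff_integrable_smul' hφ (by simp)]
    simp only [ENNReal.toReal_ofReal (φ.nonneg_normed _)]
    exact φ.hasCompactSupport_normed.convolutionExists_left (ContinuousLinearMap.lsmul ℝ ℝ)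
      φ.continuous_normed hw z
  simp only [mollify_eq, ← integral_sub (integrable_sub _) (integrable_sub _)]
  refine lintegral_enorm_integral_sq_le (by fun_prop) fun t => ?_
  rw [← lintegral_sub_right_eq_self (fun z => ‖w (z + e) - w z‖ₑ ^ 2) t]
  simp only [add_sub_right_comm, le_refl]

end Mollify

section Poincare

variable {V : Type*} [NormedAddCommGroup V] [InnerProductSpace ℝ V]

lemma enorm_dual_sq_eq_sum {ι : Type*} [Fintype ι] (b : OrthonormalBasis ι ℝ V)
    (L : StrongDual ℝ V) : ‖L‖ₑ ^ 2 = ∑ i, ‖L (b i)‖ₑ ^ 2 := by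
  simp only [← ofReal_norm, ← ENNReal.ofReal_pow (norm_nonneg _)]
  rw [b.norm_dual, ENNReal.ofReal_sum_of_nonneg fun i _ => sq_nonneg _]
  simp only [Real.norm_eq_abs, sq_abs]

variable [FiniteDimensional ℝ V] [MeasurableSpace V] [BorelSpace V]

lemma lintegral_enorm_fderiv_sq_eq_sum {ι : Type*} [Fintype ι] (b : OrthonormalBasis ι ℝ V)
    (v : V → ℝ) :
    ∫⁻ x, ‖fderiv ℝ v x‖ₑ ^ 2 = ∑ i, ∫⁻ x, ‖fderiv ℝ v x (b i)‖ₑ ^ 2 := by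
  simp only [enorm_dual_sq_eq_sum b]
  exact lintegral_finsetSum _ fun i _ => (measurable_fderiv_apply_const ℝ _ _).enorm.pow_const 2

/-- The domain `E` satisfies a Poincaré inequality with constant `c`: the Dirichlet energy of every
test function supported inside `E` is at least `c` times its squared `L²` norm. For `c < 0` this
carries no information. -/
def PoincareIneq (E : Set V) (c : ℝ) : Prop :=
  ∀ v : V → ℝ, ContDiff ℝ (⊤ : ℕ∞) v → HasCompactSupport v → tsupport v ⊆ interior E →
    ENNReal.ofReal c * ∫⁻ x, ‖v x‖ₑ ^ 2 ≤ ∫⁻ x, ‖fderiv ℝ v x‖ₑ ^ 2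

variable {E F : Set V} {c : ℝ} {w : V → ℝ}

lemma PoincareIneq.lintegral_mollify_le {ι : Type*} [Fintype ι] (b : OrthonormalBasis ι ℝ V)
    (hP : PoincareIneq E c) {C : ι → ℝ≥0∞} (hwm : Measurable w) (hw : LocallyIntegrable w)
    (hC : ∀ i (h : ℝ), ∫⁻ z, ‖w (z + h • b i) - w z‖ₑ ^ 2 ≤ ‖h‖ₑ ^ 2 * C i) {K : Set V}
    (hK : IsCompact K) (hwK : Function.support w ⊆ K) {φ : ContDiffBump (0 : V)}
    (hφ : cthickening φ.rOut K ⊆ interior E) :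
    ENNReal.ofReal c * ∫⁻ z, ‖mollify volume φ w z‖ₑ ^ 2 ≤ ∑ i, C i := by
  have smooth : ContDiff ℝ (⊤ : ℕ∞) (mollify volume φ w) := contDiff_mollify φ hw
  have smooth_one : ContDiff ℝ 1 (mollify volume φ w) := smooth.of_le (by exact_mod_cast le_top)
  have support_subset := support_mollify_subset (μ := volume) φ hwK
  calc ENNReal.ofReal c * ∫⁻ z, ‖mollify volume φ w z‖ₑ ^ 2
      ≤ ∫⁻ z, ‖fderiv ℝ (mollify volume φ w) z‖ₑ ^ 2 :=
        hP _ smooth (.of_support_subset_isCompact hK.cthickening support_subset)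
          ((closure_minimal support_subset isClosed_cthickening).trans hφ)
    _ = ∑ i, ∫⁻ z, ‖fderiv ℝ (mollify volume φ w) z (b i)‖ₑ ^ 2 :=
        lintegral_enorm_fderiv_sq_eq_sum b _
    _ ≤ ∑ i, C i := Finset.sum_le_sum fun i _ =>
        lintegral_enorm_fderiv_sq_le_of_shift smooth_one fun h =>
          (lintegral_enorm_mollify_shift_sq_le φ hwm hw _).trans (hC i h)

/-- Shift bounds in `L²` substitute for differentiability of `w` because mollification preserves
them. -/
lemma PoincareIneq.lintegral_le_of_shift {ι : Type*} [Fintype ι] (b : OrthonormalBasis ι ℝ V)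
    (hP : PoincareIneq E c) {C : ι → ℝ≥0∞} (hwm : Measurable w) (hw : LocallyIntegrable w)
    (hC : ∀ i (h : ℝ), ∫⁻ z, ‖w (z + h • b i) - w z‖ₑ ^ 2 ≤ ‖h‖ₑ ^ 2 * C i) {K : Set V}
    (hK : IsCompact K) (hKE : K ⊆ interior E) (hwK : Function.support w ⊆ K) :
    ENNReal.ofReal c * ∫⁻ z, ‖w z‖ₑ ^ 2 ≤ ∑ i, C i := by
  obtain ⟨δ, hδ, hKδ⟩ := hK.exists_cthickening_subset_open isOpen_interior hKE
  let r (n : ℕ) : ℝ := 1 / ((n : ℝ) + 1)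
  have hr (n : ℕ) : 0 < r n := Nat.one_div_pos_of_nat
  have hr2 : Tendsto (fun n => 2 * r n) atTop (𝓝 0) := by
    simpa [r] using tendsto_one_div_add_atTop_nhds_zero_nat.const_mul (2 : ℝ)
  let φ (n : ℕ) : ContDiffBump (0 : V) := ⟨r n, 2 * r n, hr n, by linarith [hr n]⟩
  rw [← lintegral_const_mul _ (by fun_prop)]
  refine lintegral_le_of_ae_tendsto
    (F := fun n z => ENNReal.ofReal c * ‖mollify volume (φ n) w z‖ₑ ^ 2) (fun n => ?_) ?_ ?_
  · have := (contDiff_mollify (μ := volume) (φ n) hw).continuous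
    fun_prop
  · filter_upwards [ContDiffBump.ae_convolution_tendsto_right_of_locallyIntegrable (K := 2)
      (φ := φ) hr2 (.of_forall fun n => le_rfl) hw] with z hz
    exact ENNReal.Tendsto.const_mul (((ENNReal.continuous_pow 2).tendsto _).comp hz.enorm)
      (.inr ENNReal.ofReal_ne_top)
  · filter_upwards [hr2.eventually_le_const hδ] with n hn
    rw [lintegral_const_mul' _ _ ENNReal.ofReal_ne_top]
    exact hP.lintegral_mollify_le b hwm hw hC hK hwK ((cthickening_mono hn K).trans hKδ)

end Poincare

lemma lintegral_enorm_sq_eq_ofReal_integral {α F : Type*} [TopologicalSpace α] [MeasurableSpace α]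
    [OpensMeasurableSpace α] [NormedAddCommGroup F] {μ : Measure α} [IsFiniteMeasureOnCompacts μ]
    {g : α → F} (hg : Continuous g) (hc : HasCompactSupport g) :
    ∫⁻ x, ‖g x‖ₑ ^ 2 ∂μ = ENNReal.ofReal (∫ x, ‖g x‖ ^ 2 ∂μ) := by
  have hi : Integrable (fun x => ‖g x‖ ^ 2) μ :=
    Continuous.integrable_of_hasCompactSupport (by fun_prop)
      (hc.comp_left (g := (‖·‖ ^ 2)) (by simp))
  rw [ofReal_integral_eq_lintegral_ofReal hi (ae_of_all _ fun _ => sq_nonneg _)]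
  simp only [ENNReal.ofReal_pow, norm_nonneg, ofReal_norm]

lemma lintegral_enorm_sq_ne_top {α F : Type*} [TopologicalSpace α] [MeasurableSpace α]
    [OpensMeasurableSpace α] [NormedAddCommGroup F] {μ : Measure α} [IsFiniteMeasureOnCompacts μ]
    {g : α → F} (hg : Continuous g) (hc : HasCompactSupport g) : ∫⁻ x, ‖g x‖ₑ ^ 2 ∂μ ≠ ∞ :=
  (lintegral_enorm_sq_eq_ofReal_integral hg hc).trans_ne ENNReal.ofReal_ne_top

section PoincareTransformations

variable {V : Type*} [NormedAddCommGroup V] [InnerProductSpace ℝ V] [FiniteDimensional ℝ V]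
  [MeasurableSpace V] [BorelSpace V] {E F : Set V} {c : ℝ}

lemma PoincareIneq.mono_set (hP : PoincareIneq F c) (hEF : E ⊆ F) : PoincareIneq E c :=
  fun v hv hc hs => hP v hv hc (hs.trans (interior_mono hEF))

lemma PoincareIneq.of_tendsto {ι : Type*} {l : Filter ι} [l.NeBot] {a : ι → ℝ}
    (ha : Tendsto a l (𝓝 c)) (hP : ∀ᶠ i in l, PoincareIneq E (a i)) : PoincareIneq E c :=
  fun v hv hc hs => le_of_tendsto
    (ENNReal.Tendsto.mul_const (ENNReal.tendsto_ofReal ha)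
      (.inr (lintegral_enorm_sq_ne_top hv.continuous hc)))
    (hP.mono fun _ hi => hi v hv hc hs)

lemma lintegral_comp_similarity (f : V → ℝ≥0∞) (B : V ≃ₗᵢ[ℝ] V) {σ : ℝ} (hσ : σ ≠ 0) (x₁ : V) :
    ∫⁻ z, f (x₁ + σ • B z) =
      ENNReal.ofReal |(σ ^ Module.finrank ℝ V)⁻¹| * ∫⁻ x, f x := by
  rw [B.measurePreserving.lintegral_comp_emb B.toHomeomorph.measurableEmbedding
      (fun z => f (x₁ + σ • z)),
    ← (measurableEmbedding_const_smul₀ hσ).lintegral_map (fun z => f (x₁ + z)),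
    Measure.map_addHaar_smul volume hσ, lintegral_smul_measure, lintegral_add_left_eq_self,
    smul_eq_mul]

lemma enorm_fderiv_comp_similarity {V : Type*} [NormedAddCommGroup V] [NormedSpace ℝ V]
    {u : V → ℝ} (hu : Differentiable ℝ u) (B : V ≃ₗᵢ[ℝ] V)
    (σ : ℝ) (x₁ z : V) :
    ‖fderiv ℝ (fun z => u (x₁ + σ • B z)) z‖ₑ = ‖σ‖ₑ * ‖fderiv ℝ u (x₁ + σ • B z)‖ₑ := by
  have hk : HasFDerivAt (fun z => x₁ + σ • B z) (σ • (B.toContinuousLinearEquiv : V →L[ℝ] V)) z :=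
    (B.toContinuousLinearEquiv.hasFDerivAt.const_smul σ).const_add x₁
  have hd := ((hu (x₁ + σ • B z)).hasFDerivAt.comp z hk).fderiv
  rw [Function.comp_def] at hd
  rw [hd, ContinuousLinearMap.comp_smul, enorm_smul]
  congr 1
  simp only [← ofReal_norm]
  congr 1
  exact ContinuousLinearMap.opNorm_comp_linearIsometryEquiv _ B

lemma PoincareIneq.of_similarity (hP : PoincareIneq F c) (B : V ≃ₗᵢ[ℝ] V) {σ : ℝ} (hσ : σ ≠ 0)
    (x₁ : V) (hEF : ∀ z, x₁ + σ • B z ∈ E → z ∈ F) : PoincareIneq E (c * (σ ^ 2)⁻¹) := by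
  intro u hu huc hus
  let k : V ≃ₜ V := B.toHomeomorph.trans
    ((Homeomorph.smulOfNeZero σ hσ).trans (Homeomorph.addLeft x₁))
  have hk : ContDiff ℝ (⊤ : ℕ∞) k :=
    contDiff_const.add (B.toContinuousLinearEquiv.contDiff.const_smul σ)
  have tsupport_subset : tsupport (u ∘ k) ⊆ interior F :=
    ((k.continuous.closure_preimage_subset _).trans (preimage_mono hus)).trans <|
      interior_maximal (fun z hz => hEF z (interior_subset hz))
        (isOpen_interior.preimage k.continuous)
  have energy_le := hP (u ∘ k) (hu.comp hk) (huc.comp_homeomorph k) tsupport_subset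
  change ENNReal.ofReal c * ∫⁻ z, ‖u (x₁ + σ • B z)‖ₑ ^ 2 ≤
    ∫⁻ z, ‖fderiv ℝ (fun z => u (x₁ + σ • B z)) z‖ₑ ^ 2 at energy_le
  simp only [enorm_fderiv_comp_similarity (hu.differentiable (by simp)), mul_pow] at energy_le
  rw [lintegral_const_mul' _ _ (by simp), lintegral_comp_similarity (‖u ·‖ₑ ^ 2) B hσ,
    lintegral_comp_similarity (‖fderiv ℝ u ·‖ₑ ^ 2) B hσ, mul_left_comm,
    mul_left_comm (‖σ‖ₑ ^ 2), ENNReal.mul_le_mul_iff_right (by simp [hσ]) ENNReal.ofReal_ne_top,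
    mul_comm (‖σ‖ₑ ^ 2), ← ENNReal.div_le_iff_le_mul (by simp [hσ]) (by simp)] at energy_le
  convert energy_le using 1
  rw [ENNReal.ofReal_mul' (by positivity), ENNReal.ofReal_inv_of_pos (by positivity),
    ← sq_abs, ENNReal.ofReal_pow (abs_nonneg _), ← Real.norm_eq_abs, ofReal_norm,
    div_eq_mul_inv, mul_right_comm]

/-- The dilates of `E` have Poincaré constants converging to that of `E`, so it is enough to treat
these slightly larger domains. -/
lemma PoincareIneq.of_forall_dilate (hP : PoincareIneq E c)
    (h : ∀ s : ℝ, 1 < s → ∀ c', PoincareIneq {z | s⁻¹ • z ∈ E} c' → PoincareIneq F c') :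
    PoincareIneq F c := by
  have tendsto_const : Tendsto (fun s : ℝ => c * (s ^ 2)⁻¹) (𝓝[>] 1) (𝓝 c) := by
    have : ContinuousAt (fun s : ℝ => c * (s ^ 2)⁻¹) 1 := by
      fun_prop (disch := norm_num)
    simpa using this.tendsto.mono_left nhdsWithin_le_nhds
  refine .of_tendsto tendsto_const (eventually_nhdsWithin_of_forall fun s hs => h s hs _ ?_)
  have hs0 : s ≠ 0 := (one_pos.trans hs).ne'
  exact hP.of_similarity (.refl ℝ V) hs0 0 fun z hz => by
    simpa [smul_smul, inv_mul_cancel₀ hs0] using hz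

end PoincareTransformations

lemma exists_normalized_testFunction {E : Set E2} {v : E2 → ℝ} (hv : ContDiff ℝ (⊤ : ℕ∞) v)
    (hc : HasCompactSupport v) (hs : tsupport v ⊆ interior E) (hN : 0 < ∫ x, v x ^ 2) :
    ∃ u : E2 → ℝ, ContDiff ℝ (⊤ : ℕ∞) u ∧ HasCompactSupport u ∧ tsupport u ⊆ interior E ∧
      (∫ x, u x ^ 2) = 1 ∧ (∫ x, ‖fderiv ℝ v x‖ ^ 2) / ∫ x, v x ^ 2 = ∫ x, ‖fderiv ℝ u x‖ ^ 2 := by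
  refine ⟨fun x => (√(∫ x, v x ^ 2))⁻¹ * v x, contDiff_const.mul hv, hc.mul_left,
    (closure_mono fun x hx => right_ne_zero_of_mul hx).trans hs, ?_, ?_⟩
  · simp only [mul_pow, integral_const_mul, inv_pow, Real.sq_sqrt hN.le]
    exact inv_mul_cancel₀ hN.ne'
  · simp only [fderiv_const_mul (hv.differentiable (by simp) _), norm_smul, mul_pow,
      Real.norm_eq_abs, sq_abs, inv_pow, Real.sq_sqrt hN.le, integral_const_mul, div_eq_inv_mul]

lemma poincareIneq_dirichletEigenvalue (E : Set E2) : PoincareIneq E (dirichletEigenvalue E) := by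
  intro v hv hc hs
  have norm_sq (x : E2) : ‖v x‖ ^ 2 = v x ^ 2 := by rw [Real.norm_eq_abs, sq_abs]
  have hN : 0 ≤ ∫ x, v x ^ 2 := integral_nonneg fun _ => sq_nonneg _
  rw [lintegral_enorm_sq_eq_ofReal_integral hv.continuous hc,
    lintegral_enorm_sq_eq_ofReal_integral (hv.continuous_fderiv (by simp)) (hc.fderiv ℝ)]
  simp only [norm_sq]
  rw [← ENNReal.ofReal_mul' hN]
  refine ENNReal.ofReal_le_ofReal ?_
  rcases hN.eq_or_lt with hN | hN
  · rw [← hN, mul_zero]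
    exact integral_nonneg fun _ => sq_nonneg _
  · refine (le_div_iff₀ hN).1 (csInf_le ⟨0, ?_⟩ (exists_normalized_testFunction hv hc hs hN))
    rintro t ⟨u, -, -, -, -, rfl⟩
    exact integral_nonneg fun _ => sq_nonneg _

lemma PoincareIneq.le_dirichletEigenvalue {E : Set E2} {c : ℝ} (hP : PoincareIneq E c)
    (hE : (interior E).Nonempty) : c ≤ dirichletEigenvalue E := by
  refine le_csInf ?_ ?_
  · obtain ⟨x, hx⟩ := hE
    obtain ⟨f, hfs, hfc, hf, -, hfx⟩ := exists_contDiff_tsupport_subset (n := (⊤ : ℕ∞))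
      (isOpen_interior.mem_nhds hx)
    exact ⟨_, exists_normalized_testFunction hf hfc hfs <|
      (hf.continuous.pow 2).integral_pos_of_hasCompactSupport_nonneg_nonzero
        (hfc.comp_left (g := fun x : ℝ => x ^ 2) (by simp)) (fun _ => sq_nonneg _)
        (x := x) (by simp [hfx])⟩
  · rintro t ⟨u, hu, hc, hs, hu1, rfl⟩
    have energy_le := hP u hu hc hs
    rw [lintegral_enorm_sq_eq_ofReal_integral hu.continuous hc,
      lintegral_enorm_sq_eq_ofReal_integral (hu.continuous_fderiv (by simp)) (hc.fderiv ℝ)]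
      at energy_le
    simp only [Real.norm_eq_abs (u _), sq_abs, hu1, ENNReal.ofReal_one, mul_one] at energy_le
    exact (ENNReal.ofReal_le_ofReal_iff (integral_nonneg fun _ => sq_nonneg _)).1 energy_le

section Steiner

variable {u : ℝ × ℝ → ℝ} {M : ℝ}

/-- The Steiner symmetrization of a function on `ℝ × ℝ` with respect to the vertical axis: each
horizontal section is replaced by its symmetric decreasing rearrangement. -/
def steinerFun (u : ℝ × ℝ → ℝ) (z : ℝ × ℝ) : ℝ := symmRearr volume (fun x => u (x, z.2)) z.1

lemma measurable_steinerFun (hM : ∀ z, |u z| ≤ M) (hu : Measurable u) :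
    Measurable (steinerFun u) := by
  refine measurable_of_Ioi fun t => ?_
  rcases lt_or_ge t 0 with ht | ht
  · convert MeasurableSet.univ
    exact eq_univ_of_forall fun z => ht.trans_le (symmRearr_nonneg _ _ _)
  · have superlevel : steinerFun u ⁻¹' Ioi t =
        {z | ENNReal.ofReal (2 * |z.1|) < distribFun volume (fun x => u (x, z.2)) t} :=
      ext fun z => lt_symmRearr_iff (fun x => hM (x, z.2)) ht
    rw [superlevel]
    exact measurableSet_lt (by fun_prop) <|
      (measurable_measure_prodMk_right (measurableSet_lt measurable_const hu.norm)).comp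
        measurable_snd

lemma lintegral_enorm_steinerFun_sq (hM : ∀ z, |u z| ≤ M) (hu : Measurable u) :
    ∫⁻ z, ‖steinerFun u z‖ₑ ^ 2 = ∫⁻ z, ‖u z‖ₑ ^ 2 := by
  have := measurable_steinerFun hM hu
  rw [Measure.volume_eq_prod, lintegral_prod_symm' _ (by fun_prop),
    lintegral_prod_symm' _ (by fun_prop)]
  refine lintegral_congr fun y => ?_
  exact lintegral_enorm_symmRearr_sq (f := fun x => u (x, y)) (fun x => hM (x, y)) (by fun_prop)

lemma hasCompactSupport_section {X Y R : Type*} [TopologicalSpace X] [R1Space X]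
    [TopologicalSpace Y] [Zero R] {u : X × Y → R} (hc : HasCompactSupport u) (y : Y) :
    HasCompactSupport fun x => u (x, y) :=
  .of_support_subset_isCompact (hc.isCompact.image continuous_fst) fun x hx =>
    ⟨(x, y), subset_tsupport u hx, rfl⟩

lemma lintegral_enorm_steinerFun_shift_fst_sq_le (hM : ∀ z, |u z| ≤ M) (hu : ContDiff ℝ 1 u)
    (hc : HasCompactSupport u) (h : ℝ) :
    ∫⁻ z, ‖steinerFun u (z + (h, 0)) - steinerFun u z‖ₑ ^ 2 ≤
      ‖h‖ₑ ^ 2 * ∫⁻ z, ‖fderiv ℝ u z (1, 0)‖ₑ ^ 2 := by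
  have := measurable_steinerFun hM hu.continuous.measurable
  have deriv_section (x y : ℝ) : deriv (fun x => u (x, y)) x = fderiv ℝ u (x, y) (1, 0) :=
    ((hu.differentiable one_ne_zero _).hasFDerivAt.comp_hasDerivAt x
      ((hasDerivAt_id x).prodMk (hasDerivAt_const x y))).deriv
  rw [Measure.volume_eq_prod, lintegral_prod_symm' _ (by fun_prop), lintegral_prod_symm' _
      ((measurable_fderiv_apply_const ℝ u _).enorm.pow_const 2),
    ← lintegral_const_mul' _ _ (by simp)]
  refine lintegral_mono fun y => ?_
  simpa [steinerFun, deriv_section] using lintegral_enorm_symmRearr_shift_sq_le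
    (fun x => hM (x, y)) (hu.comp (contDiff_id.prodMk contDiff_const))
    (hasCompactSupport_section hc y) h

lemma lintegral_enorm_steinerFun_shift_snd_sq_le (hM : ∀ z, |u z| ≤ M) (hu : ContDiff ℝ 1 u)
    (hc : HasCompactSupport u) (h : ℝ) :
    ∫⁻ z, ‖steinerFun u (z + (0, h)) - steinerFun u z‖ₑ ^ 2 ≤
      ‖h‖ₑ ^ 2 * ∫⁻ z, ‖fderiv ℝ u z (0, 1)‖ₑ ^ 2 := by
  have := measurable_steinerFun hM hu.continuous.measurable
  have hum := hu.continuous.measurable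
  have section_finite (y : ℝ) : ∫⁻ x, ‖u (x, y)‖ₑ ^ 2 ≠ ∞ :=
    lintegral_enorm_sq_ne_top (hu.continuous.comp (by fun_prop)) (hasCompactSupport_section hc y)
  calc ∫⁻ z, ‖steinerFun u (z + (0, h)) - steinerFun u z‖ₑ ^ 2
      ≤ ∫⁻ z, ‖u (z + (0, h)) - u z‖ₑ ^ 2 := by
        rw [Measure.volume_eq_prod, lintegral_prod_symm' _ (by fun_prop),
          lintegral_prod_symm' _ (by fun_prop)]
        refine lintegral_mono fun y => ?_
        simpa [steinerFun] using lintegral_enorm_symmRearr_sub_sq_le (fun x => hM (x, y + h))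
          (fun x => hM (x, y)) (by fun_prop) (by fun_prop) (section_finite _) (section_finite _)
    _ ≤ ∫⁻ z, ‖fderiv ℝ u z (0, h)‖ₑ ^ 2 := lintegral_enorm_shift_sub_sq_le hu (0, h)
    _ = ‖h‖ₑ ^ 2 * ∫⁻ z, ‖fderiv ℝ u z (0, 1)‖ₑ ^ 2 := by
        rw [← lintegral_const_mul' _ _ (by simp)]
        refine lintegral_congr fun z => ?_
        rw [← mul_pow, ← enorm_mul, ← smul_eq_mul, ← map_smul, Prod.smul_mk, smul_zero,
          smul_eq_mul, mul_one]

lemma lt_volume_of_steinerFun_ne_zero (hM : ∀ z, |u z| ≤ M) {z : ℝ × ℝ} (hz : steinerFun u z ≠ 0) :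
    ENNReal.ofReal (2 * |z.1|) < volume {x | u (x, z.2) ≠ 0} := by
  simpa [distribFun] using (lt_symmRearr_iff (fun x => hM (x, z.2)) le_rfl).1
    ((symmRearr_nonneg _ _ _).lt_of_ne hz.symm)

end Steiner

/-- The identification of `ℝ × ℝ` with the Euclidean plane. -/
def toPlane : (ℝ × ℝ) ≃L[ℝ] E2 :=
  (ContinuousLinearEquiv.finTwoArrow ℝ ℝ).symm.trans
    (PiLp.continuousLinearEquiv 2 ℝ fun _ : Fin 2 => ℝ).symm

@[simp] lemma toPlane_zero (z : ℝ × ℝ) : toPlane z 0 = z.1 := rfl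

@[simp] lemma toPlane_one (z : ℝ × ℝ) : toPlane z 1 = z.2 := rfl

lemma measurePreserving_toPlane : MeasurePreserving toPlane :=
  (PiLp.volume_preserving_toLp (Fin 2)).comp (volume_preserving_finTwoArrow ℝ).symm

lemma lintegral_comp_toPlane (f : E2 → ℝ≥0∞) : ∫⁻ z, f (toPlane z) = ∫⁻ x, f x :=
  measurePreserving_toPlane.lintegral_comp_emb toPlane.toHomeomorph.measurableEmbedding f

section SteinerPoincare

variable {v : E2 → ℝ} {M : ℝ}

lemma lintegral_enorm_fderiv_comp_toPlane_sq (hv : ContDiff ℝ 1 v) (e : ℝ × ℝ) :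
    ∫⁻ z, ‖fderiv ℝ (v ∘ toPlane) z e‖ₑ ^ 2 = ∫⁻ x, ‖fderiv ℝ v x (toPlane e)‖ₑ ^ 2 := by
  rw [← lintegral_comp_toPlane]
  refine lintegral_congr fun z => ?_
  rw [((hv.differentiable one_ne_zero _).hasFDerivAt.comp z toPlane.hasFDerivAt).fderiv]
  rfl

lemma lintegral_enorm_steinerFun_toPlane_shift_sq_le (hM : ∀ x, |v x| ≤ M) (hv : ContDiff ℝ 1 v)
    (hc : HasCompactSupport v) (i : Fin 2) (h : ℝ) :
    let b := EuclideanSpace.basisFun (Fin 2) ℝ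
    ∫⁻ x, ‖steinerFun (v ∘ toPlane) (toPlane.symm (x + h • b i)) -
        steinerFun (v ∘ toPlane) (toPlane.symm x)‖ₑ ^ 2 ≤
      ‖h‖ₑ ^ 2 * ∫⁻ x, ‖fderiv ℝ v x (b i)‖ₑ ^ 2 := by
  intro b
  have hM' (z) : |(v ∘ toPlane) z| ≤ M := hM _
  have hu : ContDiff ℝ 1 (v ∘ toPlane) := hv.comp toPlane.contDiff
  have huc : HasCompactSupport (v ∘ toPlane) := hc.comp_homeomorph toPlane.toHomeomorph
  rw [← lintegral_comp_toPlane]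
  fin_cases i
  · have hb : b 0 = toPlane (1, 0) := by ext j; fin_cases j <;> simp [b]
    simpa [hb, lintegral_enorm_fderiv_comp_toPlane_sq hv] using
      lintegral_enorm_steinerFun_shift_fst_sq_le hM' hu huc h
  · have hb : b 1 = toPlane (0, 1) := by ext j; fin_cases j <;> simp [b]
    simpa [hb, lintegral_enorm_fderiv_comp_toPlane_sq hv] using
      lintegral_enorm_steinerFun_shift_snd_sq_le hM' hu huc h

/-- If `K` contains the Steiner symmetrization of `H`, a Poincaré inequality around `K` is
inherited by `H`. -/
lemma PoincareIneq.of_steiner {H K K' : Set E2} {c : ℝ} (hP : PoincareIneq K' c)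
    (hK : IsCompact K) (hKK' : K ⊆ interior K')
    (hfib : ∀ x y : ℝ, ENNReal.ofReal (2 * |x|) < volume {x' : ℝ | toPlane (x', y) ∈ H} →
      toPlane (x, y) ∈ K) : PoincareIneq H c := by
  intro v hv hvc hvs
  obtain ⟨M, hM⟩ := hvc.exists_bound_of_continuous hv.continuous
  have hM' (z) : |(v ∘ toPlane) z| ≤ M := hM _
  have hum : Measurable (v ∘ toPlane) := (hv.continuous.comp toPlane.continuous).measurable
  have hwm : Measurable (steinerFun (v ∘ toPlane) ∘ toPlane.symm) :=
    (measurable_steinerFun hM' hum).comp toPlane.symm.continuous.measurable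
  have lintegral_sq :
      ∫⁻ x, ‖(steinerFun (v ∘ toPlane) ∘ toPlane.symm) x‖ₑ ^ 2 = ∫⁻ x, ‖v x‖ₑ ^ 2 := by
    simp only [← lintegral_comp_toPlane, Function.comp_apply, toPlane.symm_apply_apply]
    exact lintegral_enorm_steinerFun_sq hM' hum
  have locallyIntegrable : LocallyIntegrable (steinerFun (v ∘ toPlane) ∘ toPlane.symm) :=
    MemLp.locallyIntegrable (p := 2) ⟨hwm.aestronglyMeasurable, by
      rw [eLpNorm_lt_top_iff_lintegral_rpow_enorm_lt_top two_ne_zero ENNReal.ofNat_ne_top]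
      simpa only [ENNReal.toReal_ofNat, ENNReal.rpow_ofNat, lintegral_sq] using
        (lintegral_enorm_sq_ne_top hv.continuous hvc).lt_top⟩ one_le_two
  have support_subset : Function.support (steinerFun (v ∘ toPlane) ∘ toPlane.symm) ⊆ K := by
    intro x hx
    rw [← toPlane.apply_symm_apply x]
    refine hfib _ _ ((lt_volume_of_steinerFun_ne_zero hM' hx).trans_le (measure_mono ?_))
    exact fun x' hx' => interior_subset (s := H) (hvs (subset_tsupport v hx'))
  rw [← lintegral_sq, lintegral_enorm_fderiv_sq_eq_sum (EuclideanSpace.basisFun (Fin 2) ℝ)]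
  exact hP.lintegral_le_of_shift _ hwm locallyIntegrable
    (lintegral_enorm_steinerFun_toPlane_shift_sq_le hM (hv.of_le (by exact_mod_cast le_top)) hvc)
    hK hKK' support_subset

end SteinerPoincare

/-! ### Symmetrization of hexagons -/

/-- The centrally symmetric hexagon with vertices `±p, ±q, ±r`, described by the strips bounded
by its pairs of opposite sides. -/
def hexStrips (p q r : E2) : Set E2 :=
  {z | |det2 (q - p) z| ≤ det2 p q ∧ |det2 (r - q) z| ≤ det2 q r ∧ |det2 (p + r) z| ≤ det2 p r}

/-- The hexagon of unit area with vertices `(± w / 2, ± ρ / w)` and `(0, ± (1 - ρ) / w)`, into which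
Steiner symmetrization turns a hexagon with a horizontal diagonal of length `w`. -/
def symHex (w ρ : ℝ) : Set E2 :=
  {z | 2 * |z 0| ≤ w ∧ 2 * (1 - 2 * ρ) * |z 0| + w ^ 2 * |z 1| ≤ w * (1 - ρ)}

lemma isCompact_symHex {w ρ : ℝ} (hw : 0 < w) (hρ : ρ ≤ 1 / 2) : IsCompact (symHex w ρ) := by
  have isClosed_strip : IsClosed {z : E2 | 2 * |z 0| ≤ w} :=
    isClosed_le (by fun_prop) (by fun_prop)
  have isClosed_rhombus :
      IsClosed {z : E2 | 2 * (1 - 2 * ρ) * |z 0| + w ^ 2 * |z 1| ≤ w * (1 - ρ)} :=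
    isClosed_le (by fun_prop) (by fun_prop)
  refine IsCompact.of_isClosed_subset (((isCompact_Icc (a := -w) (b := w)).prod
    (isCompact_Icc (a := -((1 - ρ) / w)) (b := (1 - ρ) / w))).image toPlane.continuous)
    (isClosed_strip.inter isClosed_rhombus) ?_
  rintro z ⟨h₁, h₂⟩
  refine ⟨(z 0, z 1), ⟨abs_le.1 ?_, abs_le.1 ((le_div_iff₀ hw).2 ?_)⟩, toPlane.apply_symm_apply z⟩
  · linarith [abs_nonneg (z 0)]
  · have : 0 ≤ (1 - 2 * ρ) * |z 0| := mul_nonneg (by linarith) (abs_nonneg _)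
    exact le_of_mul_le_mul_left (by linarith : w * (|z 1| * w) ≤ w * (1 - ρ)) hw

lemma inv_smul_mem_symHex {w ρ t : ℝ} (ht : 0 < t) {z : E2} : t⁻¹ • z ∈ symHex w ρ ↔
    2 * |z 0| ≤ t * w ∧ 2 * (1 - 2 * ρ) * |z 0| + w ^ 2 * |z 1| ≤ t * (w * (1 - ρ)) := by
  have abs_inv_smul (i) : |(t⁻¹ • z) i| = |z i| / t := by
    rw [PiLp.smul_apply, smul_eq_mul, abs_mul, abs_of_pos (inv_pos.2 ht), div_eq_inv_mul]
  rw [symHex, mem_ofPred_eq, abs_inv_smul, abs_inv_smul, ← div_le_iff₀' ht, ← div_le_iff₀' ht]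
  ring_nf

lemma symHex_subset_interior_dilate {w ρ s : ℝ} (hw : 0 < w) (hρ : ρ < 1) (hs : 1 < s) :
    symHex w ρ ⊆ interior {z | s⁻¹ • z ∈ symHex w ρ} := by
  let U : Set E2 := {z | 2 * |z 0| < s * w} ∩
    {z | 2 * (1 - 2 * ρ) * |z 0| + w ^ 2 * |z 1| < s * (w * (1 - ρ))}
  have isOpen_U : IsOpen U :=
    (isOpen_lt (by fun_prop) (by fun_prop)).inter (isOpen_lt (by fun_prop) (by fun_prop))
  have symHex_subset : symHex w ρ ⊆ U := fun z ⟨h₁, h₂⟩ =>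
    ⟨h₁.trans_lt (lt_mul_of_one_lt_left hw hs),
      h₂.trans_lt (lt_mul_of_one_lt_left (mul_pos hw (sub_pos.2 hρ)) hs)⟩
  exact symHex_subset.trans <| interior_maximal
    (fun z ⟨h₁, h₂⟩ => (inv_smul_mem_symHex (one_pos.trans hs)).2 ⟨h₁.le, h₂.le⟩) isOpen_U

lemma mul_le_sub_of_lt_volume {S : Set ℝ} {a b κ ℓ : ℝ} (hκ : 0 ≤ κ) (hℓ : 0 ≤ ℓ)
    (hS : ∀ t ∈ S, κ * t ∈ Icc a b) (hlt : ENNReal.ofReal ℓ < volume S) : ℓ * κ ≤ b - a := by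
  rcases hκ.eq_or_lt with rfl | hκ
  · obtain ⟨t, ht⟩ := nonempty_of_measure_ne_zero (pos_of_gt hlt).ne'
    simpa using (hS t ht).1.trans (hS t ht).2
  · have hsub : S ⊆ Icc (a / κ) (b / κ) := fun t ht =>
      ⟨(div_le_iff₀' hκ).2 (hS t ht).1, (le_div_iff₀' hκ).2 (hS t ht).2⟩
    have volume_lt := hlt.trans_le (measure_mono hsub)
    rw [Real.volume_Icc, ← sub_div, ENNReal.ofReal_lt_ofReal_iff_of_nonneg hℓ] at volume_lt
    exact ((lt_div_iff₀ hκ).1 volume_lt).le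

lemma mul_add_abs_le_of_lt_volume {S : Set ℝ} {α β κ A B ℓ : ℝ} (hκ : 0 ≤ κ) (hℓ : 0 ≤ ℓ)
    (hS : ∀ t ∈ S, |α - κ * t| ≤ A ∧ |β + κ * t| ≤ B) (hlt : ENNReal.ofReal ℓ < volume S) :
    ℓ * κ + |α + β| ≤ A + B := by
  have hS' (t) (ht : t ∈ S) :
      (-A ≤ α - κ * t ∧ α - κ * t ≤ A) ∧ -B ≤ β + κ * t ∧ β + κ * t ≤ B :=
    (hS t ht).imp abs_le.1 abs_le.1
  have le_add := mul_le_sub_of_lt_volume (a := -B - β) (b := α + A) hκ hℓ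
    (fun t ht => by obtain ⟨⟨_, _⟩, _, _⟩ := hS' t ht; constructor <;> linarith) hlt
  have le_sub := mul_le_sub_of_lt_volume (a := α - A) (b := B - β) hκ hℓ
    (fun t ht => by obtain ⟨⟨_, _⟩, _, _⟩ := hS' t ht; constructor <;> linarith) hlt
  rcases abs_cases (α + β) with ⟨h, -⟩ | ⟨h, -⟩ <;> linarith

lemma toPlane_mem_symHex_of_lt_volume {p q r : E2} {w : ℝ} (hw : 0 < w) (h₀ : p 0 - r 0 = w)
    (h₁ : p 1 = r 1) (hsum : det2 p q + det2 q r + det2 p r = 1) (hpr₀ : 0 ≤ det2 p r)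
    (hpr : det2 p r ≤ 1 / 2) {x y : ℝ}
    (hlt : ENNReal.ofReal (2 * |x|) < volume {t : ℝ | toPlane (t, y) ∈ hexStrips p q r}) :
    toPlane (x, y) ∈ symHex w (det2 p r) := by
  have hp : w * p 1 = det2 p r := by rw [det2, ← h₀, h₁]; ring
  have hq : w * q 1 = 1 - det2 p r := by rw [← hsum, det2, det2, ← h₀, h₁]; ring
  have hp₀ : 0 ≤ p 1 := nonneg_of_mul_nonneg_right (hp ▸ hpr₀) hw
  have hpq : 0 ≤ q 1 - p 1 := nonneg_of_mul_nonneg_right (by linarith) hw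
  have hx : 0 ≤ 2 * |x| := by positivity
  have inclined : 2 * |x| * (q 1 - p 1) + w * |y| ≤ w * q 1 := by
    have := mul_add_abs_le_of_lt_volume (α := (q 0 - p 0) * y) (β := (r 0 - q 0) * y)
      (A := det2 p q) (B := det2 q r) hpq hx
      (fun t ht => by
        obtain ⟨h, h', -⟩ := ht
        simp only [det2, PiLp.sub_apply, toPlane_zero, toPlane_one] at h h' ⊢
        refine ⟨h, le_of_eq_of_le ?_ h'⟩
        rw [h₁]; ring_nf) hlt
    rwa [show (q 0 - p 0) * y + (r 0 - q 0) * y = -(w * y) by rw [← h₀]; ring, abs_neg, abs_mul,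
      abs_of_pos hw, show det2 p q + det2 q r = w * q 1 by linarith] at this
  have upright : 2 * |x| * p 1 ≤ w * p 1 := by
    have := mul_add_abs_le_of_lt_volume (α := (p 0 + r 0) * y) (β := -((p 0 + r 0) * y))
      (κ := 2 * p 1) (A := det2 p r) (B := det2 p r) (by positivity) hx
      (fun t ht => by
        obtain ⟨-, -, h⟩ := ht
        simp only [det2, PiLp.add_apply, toPlane_zero, toPlane_one, ← h₁, ← two_mul] at h ⊢
        refine ⟨h, le_of_eq_of_le ?_ h⟩
        rw [← abs_neg]; ring_nf) hlt
    rw [add_neg_cancel, abs_zero] at this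
    linarith
  have hwy : 0 ≤ w * |y| := by positivity
  constructor
  · change 2 * |x| ≤ w
    rcases hp₀.eq_or_lt with h | h
    · rw [← h, mul_zero] at hp
      rw [← h, sub_zero] at inclined
      have hq₀ : 0 < q 1 := pos_of_mul_pos_right (by linarith) hw.le
      exact le_of_mul_le_mul_right (by linarith) hq₀
    · exact le_of_mul_le_mul_right upright h
  · change 2 * (1 - 2 * det2 p r) * |x| + w ^ 2 * |y| ≤ w * (1 - det2 p r)
    rw [show 1 - 2 * det2 p r = w * (q 1 - p 1) by linarith, ← hq]
    linarith [mul_le_mul_of_nonneg_left inclined hw.le]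

lemma poincareIneq_hexStrips_of_horizontal {p q r : E2} {w c : ℝ} (hw : 0 < w)
    (h₀ : p 0 - r 0 = w) (h₁ : p 1 = r 1) (hsum : det2 p q + det2 q r + det2 p r = 1)
    (hpr₀ : 0 ≤ det2 p r) (hpr : det2 p r ≤ 1 / 2) (hP : PoincareIneq (symHex w (det2 p r)) c) :
    PoincareIneq (hexStrips p q r) c :=
  hP.of_forall_dilate fun _ hs _ hP' => hP'.of_steiner (isCompact_symHex hw hpr)
    (symHex_subset_interior_dilate hw (by linarith) hs) fun _ _ =>
      toPlane_mem_symHex_of_lt_volume hw h₀ h₁ hsum hpr₀ hpr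

lemma plane_ext {x y : E2} (h₀ : x 0 = y 0) (h₁ : x 1 = y 1) : x = y := by
  ext i; fin_cases i <;> assumption

/-- The rotation taking the unit vector `(a, b)` to `(1, 0)`. -/
def rotPlane (a b : ℝ) (h : a ^ 2 + b ^ 2 = 1) : E2 ≃ₗᵢ[ℝ] E2 where
  toFun z := toPlane (a * z 0 + b * z 1, -b * z 0 + a * z 1)
  invFun z := toPlane (a * z 0 - b * z 1, b * z 0 + a * z 1)
  map_add' x y := by
    apply plane_ext <;> simp only [PiLp.add_apply, toPlane_zero, toPlane_one] <;> ring
  map_smul' s x := by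
    apply plane_ext <;>
      simp only [PiLp.smul_apply, smul_eq_mul, toPlane_zero, toPlane_one, RingHom.id_apply] <;> ring
  left_inv x := by
    apply plane_ext <;> simp only [toPlane_zero, toPlane_one]
    · linear_combination x 0 * h
    · linear_combination x 1 * h
  right_inv x := by
    apply plane_ext <;> simp only [toPlane_zero, toPlane_one]
    · linear_combination x 0 * h
    · linear_combination x 1 * h
  norm_map' x := by
    refine (EuclideanSpace.norm_eq _).trans ((congrArg _ ?_).trans (EuclideanSpace.norm_eq x).symm)
    simp only [Fin.sum_univ_two, Real.norm_eq_abs, sq_abs]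
    change (a * x 0 + b * x 1) ^ 2 + (-b * x 0 + a * x 1) ^ 2 = _
    linear_combination (x 0 ^ 2 + x 1 ^ 2) * h

@[simp] lemma rotPlane_zero {a b : ℝ} (h : a ^ 2 + b ^ 2 = 1) (z : E2) :
    rotPlane a b h z 0 = a * z 0 + b * z 1 := rfl

@[simp] lemma rotPlane_one {a b : ℝ} (h : a ^ 2 + b ^ 2 = 1) (z : E2) :
    rotPlane a b h z 1 = -b * z 0 + a * z 1 := rfl

lemma det2_rotPlane {a b : ℝ} (h : a ^ 2 + b ^ 2 = 1) (u v : E2) :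
    det2 (rotPlane a b h u) (rotPlane a b h v) = det2 u v := by
  simp only [det2, rotPlane_zero, rotPlane_one]
  linear_combination (u 0 * v 1 - u 1 * v 0) * h

lemma poincareIneq_hexStrips {p q r : E2} {w c : ℝ} (hw : 0 < w)
    (hw_sq : (p 0 - r 0) ^ 2 + (p 1 - r 1) ^ 2 = w ^ 2)
    (hsum : det2 p q + det2 q r + det2 p r = 1) (hpr₀ : 0 ≤ det2 p r) (hpr : det2 p r ≤ 1 / 2)
    (hP : PoincareIneq (symHex w (det2 p r)) c) : PoincareIneq (hexStrips p q r) c := by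
  have unit : ((p 0 - r 0) / w) ^ 2 + ((p 1 - r 1) / w) ^ 2 = 1 := by
    rw [div_pow, div_pow, ← add_div, hw_sq, div_self (by positivity)]
  let B := rotPlane _ _ unit
  have det2_B (u v) : det2 (B u) (B v) = det2 u v := det2_rotPlane unit u v
  have poincare_rotated : PoincareIneq (hexStrips (B p) (B q) (B r)) c := by
    refine poincareIneq_hexStrips_of_horizontal hw ?_ ?_ ?_ ?_ ?_ ?_ <;> simp only [*]
    · simp only [B, rotPlane_zero]
      field_simp
      linear_combination hw_sq
    · simp only [B, rotPlane_one]
      field_simp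
      ring
  simpa using poincare_rotated.of_similarity (E := hexStrips p q r) B.symm one_ne_zero 0
    fun z hz => by
      simpa only [hexStrips, mem_ofPred_eq, ← map_sub, ← map_add, ← det2_B _ (B.symm z),
        B.apply_symm_apply, det2_B, one_smul, zero_add] using hz

lemma abs_det2_le (u z : E2) : |det2 u z| ≤ |u 0| * |z 1| + |u 1| * |z 0| := by
  simpa only [det2, abs_mul] using abs_sub (u 0 * z 1) (u 1 * z 0)

lemma symHex_subset_hexStrips {w ρ : ℝ} (hw : 0 < w) (hρ₀ : 0 ≤ ρ) (hρ : ρ ≤ 1 / 2) :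
    symHex w ρ ⊆ hexStrips (toPlane (0, (1 - ρ) / w)) (toPlane (-(w / 2), ρ / w))
      (toPlane (-(w / 2), -(ρ / w))) := by
  rintro z ⟨h₁, h₂⟩
  have upper_right : toPlane (-(w / 2), ρ / w) - toPlane (0, (1 - ρ) / w) =
      toPlane (-(w / 2), -((1 - 2 * ρ) / w)) := by
    rw [← map_sub, Prod.mk_sub_mk]; ring_nf
  have upright : toPlane (-(w / 2), -(ρ / w)) - toPlane (-(w / 2), ρ / w) =
      toPlane (0, -(2 * ρ / w)) := by
    rw [← map_sub, Prod.mk_sub_mk]; ring_nf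
  have upper_left : toPlane (0, (1 - ρ) / w) + toPlane (-(w / 2), -(ρ / w)) =
      toPlane (-(w / 2), (1 - 2 * ρ) / w) := by
    rw [← map_add, Prod.mk_add_mk]; ring_nf
  have inclined_le : |w / 2| * |z 1| + |(1 - 2 * ρ) / w| * |z 0| ≤ (1 - ρ) / 2 := by
    rw [abs_of_pos (half_pos hw), abs_of_nonneg (div_nonneg (by linarith) hw.le)]
    field_simp
    linarith
  have upright_le : |2 * ρ / w| * |z 0| ≤ ρ := by
    rw [abs_of_nonneg (by positivity)]
    field_simp
    nlinarith
  rw [hexStrips, upper_right, upright, upper_left]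
  refine ⟨(abs_det2_le _ _).trans ?_, (abs_det2_le _ _).trans ?_, (abs_det2_le _ _).trans ?_⟩
  · simp only [toPlane_zero, toPlane_one, abs_neg]
    exact inclined_le.trans_eq (by simp only [det2, toPlane_zero, toPlane_one]; field_simp; ring)
  · simp only [toPlane_zero, toPlane_one, abs_neg, abs_zero, zero_mul, zero_add]
    exact upright_le.trans_eq (by simp only [det2, toPlane_zero, toPlane_one]; field_simp; ring)
  · simp only [toPlane_zero, toPlane_one, abs_neg]
    exact inclined_le.trans_eq (by simp only [det2, toPlane_zero, toPlane_one]; field_simp; ring)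

lemma poincareIneq_symHex_of_next {z ρ c : ℝ} (hz : 0 < z) (hρ : ρ ∈ Icc 0 (1 / 2))
    (hP : PoincareIneq (symHex √(z / 4 + 1 / z) ((1 - ρ) / 2)) c) :
    PoincareIneq (symHex √z ρ) c := by
  obtain ⟨hρ₀, hρ⟩ := hρ
  have hw : 0 < √z := Real.sqrt_pos.2 hz
  refine PoincareIneq.mono_set ?_ (symHex_subset_hexStrips hw hρ₀ hρ)
  have det2_pr : det2 (toPlane (0, (1 - ρ) / √z)) (toPlane (-(√z / 2), -(ρ / √z))) =
      (1 - ρ) / 2 := by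
    simp only [det2, toPlane_zero, toPlane_one]; field_simp; ring
  refine poincareIneq_hexStrips (w := √(z / 4 + 1 / z)) (by positivity) ?_ ?_
    (by rw [det2_pr]; linarith) (by rw [det2_pr]; linarith) (by rwa [det2_pr])
  · simp only [toPlane_zero, toPlane_one]
    rw [Real.sq_sqrt (by positivity), zero_sub, neg_neg, sub_neg_eq_add, ← add_div,
      sub_add_cancel, div_pow, div_pow, Real.sq_sqrt hz.le]
    norm_num
  · simp only [det2, toPlane_zero, toPlane_one]
    field_simp; ring

/-- The action on the parameters `(w ^ 2, ρ)` of `symHex w ρ` of Steiner symmetrization with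
respect to the perpendicular of another diagonal. -/
def nextParam (a : ℝ × ℝ) : ℝ × ℝ := (a.1 / 4 + 1 / a.1, (1 - a.2) / 2)

lemma nextParam_fst_pos {a : ℝ × ℝ} (h : 0 < a.1) : 0 < (nextParam a).1 := by
  unfold nextParam; positivity

lemma nextParam_snd_mem_Icc {a : ℝ × ℝ} (h : a.2 ∈ Icc 0 (1 / 2)) :
    (nextParam a).2 ∈ Icc 0 (1 / 2) := by
  obtain ⟨_, _⟩ := h
  constructor <;> simp only [nextParam] <;> linarith

lemma poincareIneq_symHex_of_iterate_nextParam {c : ℝ} (n : ℕ) {a : ℝ × ℝ} (h₁ : 0 < a.1)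
    (h₂ : a.2 ∈ Icc 0 (1 / 2))
    (hP : PoincareIneq (symHex √(nextParam^[n] a).1 (nextParam^[n] a).2) c) :
    PoincareIneq (symHex √a.1 a.2) c := by
  induction n generalizing a with
  | zero => exact hP
  | succ n ih =>
    exact poincareIneq_symHex_of_next h₁ h₂ <|
      ih (a := nextParam a) (nextParam_fst_pos h₁) (nextParam_snd_mem_Icc h₂) hP

lemma one_le_nextParam_fst {a : ℝ × ℝ} (h : 0 < a.1) : 1 ≤ (nextParam a).1 := by
  have sub_one : (nextParam a).1 - 1 = (a.1 / 2 - 1) ^ 2 / a.1 := by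
    simp only [nextParam]; field_simp; ring
  have : 0 ≤ (a.1 / 2 - 1) ^ 2 / a.1 := by positivity
  linarith

lemma dist_nextParam_fst_le {s : ℝ} (hs₀ : 0 < s) (hs : s ^ 2 = 4 / 3) {a : ℝ × ℝ}
    (h : 1 ≤ a.1) : dist (nextParam a).1 s ≤ 3 / 4 * dist a.1 s := by
  have hs₁ : 1 ≤ s := by nlinarith
  have has : 1 ≤ a.1 * s := one_le_mul_of_one_le_of_one_le h hs₁
  have inv_le : 1 / (a.1 * s) ≤ 1 := (div_le_one (by positivity)).2 has
  have inv_nonneg : 0 ≤ 1 / (a.1 * s) := by positivity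
  have sub_eq : (nextParam a).1 - s = (1 / 4 - 1 / (a.1 * s)) * (a.1 - s) := by
    simp only [nextParam]
    field_simp
    linear_combination (-3 * a.1 : ℝ) * hs
  rw [Real.dist_eq, Real.dist_eq, sub_eq, abs_mul]
  exact mul_le_mul_of_nonneg_right (abs_le.2 ⟨by linarith, by linarith⟩) (abs_nonneg _)

lemma dist_nextParam_snd (a : ℝ × ℝ) :
    dist (nextParam a).2 (1 / 3) = 1 / 2 * dist a.2 (1 / 3) := by
  rw [Real.dist_eq, Real.dist_eq, show (nextParam a).2 - 1 / 3 = -(1 / 2 * (a.2 - 1 / 3)) by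
    simp only [nextParam]; ring, abs_neg, abs_mul, abs_of_pos one_half_pos]

lemma dist_nextParam_le {s : ℝ} (hs₀ : 0 < s) (hs : s ^ 2 = 4 / 3) {a : ℝ × ℝ} (h : 1 ≤ a.1) :
    dist (nextParam a) (s, 1 / 3) ≤ 3 / 4 * dist a (s, 1 / 3) := by
  rw [Prod.dist_eq, Prod.dist_eq, mul_max_of_nonneg _ _ (by norm_num)]
  refine max_le_max (dist_nextParam_fst_le hs₀ hs h) ((dist_nextParam_snd a).trans_le ?_)
  exact mul_le_mul_of_nonneg_right (by norm_num) dist_nonneg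

lemma tendsto_iterate_nextParam {s : ℝ} (hs₀ : 0 < s) (hs : s ^ 2 = 4 / 3) {a : ℝ × ℝ}
    (ha : 0 < a.1) : Tendsto (fun n => nextParam^[n] a) atTop (𝓝 (s, 1 / 3)) := by
  have one_le (n : ℕ) : 1 ≤ (nextParam^[n + 1] a).1 := by
    induction n with
    | zero => exact one_le_nextParam_fst ha
    | succ n ih =>
      rw [Function.iterate_succ_apply']
      exact one_le_nextParam_fst (one_pos.trans_le ih)
  have dist_le (n : ℕ) : dist (nextParam^[n + 1] a) (s, 1 / 3) ≤
      (3 / 4) ^ n * dist (nextParam a) (s, 1 / 3) := by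
    induction n with
    | zero => simp
    | succ n ih =>
      rw [Function.iterate_succ_apply', pow_succ', mul_assoc]
      exact (dist_nextParam_le hs₀ hs (one_le n)).trans (by gcongr)
  rw [← tendsto_add_atTop_iff_nat 1, tendsto_iff_dist_tendsto_zero]
  refine squeeze_zero (fun _ => dist_nonneg) dist_le ?_
  simpa using (tendsto_pow_atTop_nhds_zero_of_lt_one (r := (3 / 4 : ℝ)) (by norm_num)
    (by norm_num)).mul_const _

lemma symHex_subset_dilate {w w' ρ ρ' t : ℝ} (hw : 0 < w) (ht : 0 < t) (h₀ : w ≤ t * w')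
    (h₁ : w' ^ 2 * (1 - ρ) ≤ t * (w' * (1 - ρ')) * w)
    (h₂ : (1 - 2 * ρ') * w ^ 2 + w' ^ 2 * ρ ≤ t * (w' * (1 - ρ')) * w) :
    symHex w ρ ⊆ {z | t⁻¹ • z ∈ symHex w' ρ'} := by
  rintro z ⟨hz₁, hz₂⟩
  refine (inv_smul_mem_symHex ht).2 ⟨hz₁.trans h₀, ?_⟩
  have convex_combination := add_le_add (mul_le_mul_of_nonneg_left h₁ (sub_nonneg.2 hz₁))
    (mul_le_mul_of_nonneg_left h₂ (by positivity : 0 ≤ 2 * |z 0|))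
  have scaled := mul_le_mul_of_nonneg_left hz₂ (sq_nonneg w')
  refine le_of_mul_le_mul_left ?_ (pow_pos hw 2)
  linarith

lemma eventually_symHex_subset_dilate {w ρ t : ℝ} (hw : 0 < w) (hρ : ρ < 1) (ht : 1 < t) :
    ∀ᶠ a : ℝ × ℝ in 𝓝 (w, ρ), symHex a.1 a.2 ⊆ {z | t⁻¹ • z ∈ symHex w ρ} := by
  have lt_dilate : (1 - ρ) * w ^ 2 < t * (w * (1 - ρ)) * w := by
    have := lt_mul_of_one_lt_left (mul_pos (sub_pos.2 hρ) (pow_pos hw 2)) ht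
    linarith
  have h₀ : ∀ᶠ a : ℝ × ℝ in 𝓝 (w, ρ), a.1 < t * w :=
    continuousAt_fst.eventually_lt continuousAt_const (lt_mul_of_one_lt_left hw ht)
  have h₁ : ∀ᶠ a : ℝ × ℝ in 𝓝 (w, ρ), w ^ 2 * (1 - a.2) < t * (w * (1 - ρ)) * a.1 :=
    ContinuousAt.eventually_lt (by fun_prop) (by fun_prop) (by linarith)
  have h₂ : ∀ᶠ a : ℝ × ℝ in 𝓝 (w, ρ),
      (1 - 2 * ρ) * a.1 ^ 2 + w ^ 2 * a.2 < t * (w * (1 - ρ)) * a.1 :=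
    ContinuousAt.eventually_lt (by fun_prop) (by fun_prop) (by linarith)
  filter_upwards [h₀, h₁, h₂, continuousAt_fst.eventually (lt_mem_nhds hw)] with a h₀ h₁ h₂ ha
  exact symHex_subset_dilate ha (one_pos.trans ht) h₀.le h₁.le h₂.le

/-- Alternately symmetrizing along the diagonals makes every `symHex` converge to the regular one,
which is `symHex √s (1 / 3)`. -/
lemma poincareIneq_symHex {s w ρ c : ℝ} (hs₀ : 0 < s) (hs : s ^ 2 = 4 / 3) (hw : 0 < w)
    (hρ : ρ ∈ Icc 0 (1 / 2)) (hP : PoincareIneq (symHex √s (1 / 3)) c) :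
    PoincareIneq (symHex w ρ) c := by
  refine hP.of_forall_dilate fun t ht c' hP' => ?_
  have tendsto_param : Tendsto (fun n => (√(nextParam^[n] (w ^ 2, ρ)).1,
      (nextParam^[n] (w ^ 2, ρ)).2)) atTop (𝓝 (√s, 1 / 3)) :=
    (Real.continuous_sqrt.prodMap continuous_id).continuousAt.tendsto.comp
      (tendsto_iterate_nextParam hs₀ hs (pow_pos hw 2))
  obtain ⟨n, hn⟩ := (tendsto_param.eventually
    (eventually_symHex_subset_dilate (Real.sqrt_pos.2 hs₀) (by norm_num) ht)).exists
  simpa only [Real.sqrt_sq hw.le] using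
    poincareIneq_symHex_of_iterate_nextParam n (pow_pos hw 2) hρ (hP'.mono_set hn)

/-! ### Areas of hexagons -/

@[simp] lemma det2_neg_left (u v : E2) : det2 (-u) v = -det2 u v := by
  simp only [det2, PiLp.neg_apply]; ring

@[simp] lemma det2_neg_right (u v : E2) : det2 u (-v) = -det2 u v := by
  simp only [det2, PiLp.neg_apply]; ring

lemma det2_comm (u v : E2) : det2 u v = -det2 v u := by
  simp only [det2]; ring

lemma det2_sub_left (u v z : E2) : det2 (u - v) z = det2 u z - det2 v z := by
  simp only [det2, PiLp.sub_apply]; ring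

lemma det2_add_left (u v z : E2) : det2 (u + v) z = det2 u z + det2 v z := by
  simp only [det2, PiLp.add_apply]; ring

lemma eq_zero_of_det2_eq_zero {u v z : E2} (h : det2 u v ≠ 0) (hu : det2 u z = 0)
    (hv : det2 v z = 0) : z = 0 := by
  simp only [det2] at h hu hv
  apply plane_ext <;> refine (mul_eq_zero_iff_left h).1 ?_
  · change _ = (0 : ℝ)
    linear_combination v 0 * hu - u 0 * hv
  · linear_combination v 1 * hu - u 1 * hv

/-- The triangle with vertices `0`, `u`, `v` (empty when these are not in counterclockwise order).
It contains its side on the ray of `u` but not the one on the ray of `v`, so that adjacent triangles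
are disjoint. -/
def halfOpenTriangle (u v : E2) : Set E2 :=
  {z | 0 ≤ det2 u z ∧ 0 < det2 z v ∧ det2 u z + det2 z v ≤ det2 u v}

lemma det2_pos_of_mem_halfOpenTriangle {u v z : E2} (hz : z ∈ halfOpenTriangle u v) :
    0 < det2 u v := by
  obtain ⟨_, _, _⟩ := hz
  linarith

lemma volume_setOf_add_le {d : ℝ} (hd : 0 ≤ d) :
    volume {a : ℝ × ℝ | 0 ≤ a.1 ∧ 0 < a.2 ∧ a.1 + a.2 ≤ d} = ENNReal.ofReal (d ^ 2 / 2) := by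
  have isMeasurable : MeasurableSet {a : ℝ × ℝ | 0 ≤ a.1 ∧ 0 < a.2 ∧ a.1 + a.2 ≤ d} := by
    measurability
  have volume_slice (x : ℝ) :
      volume (Prod.mk x ⁻¹' {a : ℝ × ℝ | 0 ≤ a.1 ∧ 0 < a.2 ∧ a.1 + a.2 ≤ d}) =
        (Icc 0 d).indicator (fun x => ENNReal.ofReal (d - x)) x := by
    by_cases hx : x ∈ Icc 0 d
    · rw [indicator_of_mem hx, ← sub_zero (d - x), ← Real.volume_Ioc]
      congr 1
      ext y
      exact (and_iff_right hx.1).trans (and_congr_right' le_sub_iff_add_le'.symm)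
    · rw [indicator_of_notMem hx]
      refine measure_mono_null (fun y ⟨h₀, h₁, h₂⟩ => hx ⟨h₀, ?_⟩) measure_empty
      exact (le_add_of_nonneg_right h₁.le).trans h₂
  have integral_eq : ∫ x in 0..d, (d - x) = d ^ 2 / 2 := by
    rw [intervalIntegral.integral_comp_sub_left (fun x => x), integral_id]
    ring
  rw [Measure.volume_eq_prod, Measure.prod_apply isMeasurable, lintegral_congr volume_slice,
    lintegral_indicator measurableSet_Icc, ← integral_eq, intervalIntegral.integral_of_le hd,
    ← integral_Icc_eq_integral_Ioc, ofReal_integral_eq_lintegral_ofReal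
      (Continuous.integrableOn_Icc (by fun_prop))]
  exact (ae_restrict_iff' measurableSet_Icc).2 (.of_forall fun x hx => sub_nonneg.2 hx.2)

lemma measurableSet_halfOpenTriangle (u v : E2) : MeasurableSet (halfOpenTriangle u v) := by
  unfold halfOpenTriangle det2
  measurability

lemma volume_halfOpenTriangle {u v : E2} (h : 0 ≤ det2 u v) :
    volume (halfOpenTriangle u v) = ENNReal.ofReal (det2 u v / 2) := by
  rcases h.eq_or_lt with h | h
  · rw [← h, zero_div, ENNReal.ofReal_zero]
    exact measure_mono_null (fun z hz => h.not_lt (det2_pos_of_mem_halfOpenTriangle hz))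
      measure_empty
  let L : ℝ × ℝ →ₗ[ℝ] ℝ × ℝ :=
    Matrix.toLin (.finTwoProd ℝ) (.finTwoProd ℝ) !![-u 1, u 0; v 1, -v 0]
  have det_L : LinearMap.det L = -det2 u v := by
    rw [LinearMap.det_toLin, Matrix.det_fin_two_of, det2]; ring
  have preimage_toPlane : toPlane ⁻¹' halfOpenTriangle u v =
      L ⁻¹' {a | 0 ≤ a.1 ∧ 0 < a.2 ∧ a.1 + a.2 ≤ det2 u v} := by
    ext a
    simp only [halfOpenTriangle, det2, L, mem_preimage, mem_ofPred_eq, toPlane_zero, toPlane_one,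
      Matrix.toLin_finTwoProd_apply]
    ring_nf
  rw [← measurePreserving_toPlane.measure_preimage
      (measurableSet_halfOpenTriangle u v).nullMeasurableSet, preimage_toPlane,
    Measure.addHaar_preimage_linearMap _ (by rw [det_L]; exact neg_ne_zero.2 h.ne'), det_L,
    volume_setOf_add_le h.le, ← ENNReal.ofReal_mul (abs_nonneg _), inv_neg, abs_neg,
    abs_of_pos (inv_pos.2 h)]
  congr 1
  field_simp

lemma halfOpenTriangle_subset {C : Set E2} (hC : Convex ℝ C) (h₀ : 0 ∈ C) {u v : E2} (hu : u ∈ C)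
    (hv : v ∈ C) : halfOpenTriangle u v ⊆ C := by
  intro z hz
  have hd := det2_pos_of_mem_halfOpenTriangle hz
  obtain ⟨h₁, h₂, h₃⟩ := hz
  have barycentric : z = (det2 z v / det2 u v) • u + (det2 u z / det2 u v) • v := by
    apply plane_ext <;> simp only [PiLp.add_apply, PiLp.smul_apply, smul_eq_mul] <;> field_simp <;>
      simp only [det2] <;> ring
  have mem := hC.sum_mem (t := Finset.univ)
    (w := ![1 - (det2 z v / det2 u v + det2 u z / det2 u v), det2 z v / det2 u v,
      det2 u z / det2 u v]) (z := ![0, u, v])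
    (by
      have sum_le : det2 z v / det2 u v + det2 u z / det2 u v ≤ 1 := by
        rw [← add_div, div_le_one hd]; linarith
      simp [Fin.forall_fin_succ, sum_le, h₁, h₂.le, hd.le, div_nonneg])
    (by simp [Fin.sum_univ_three, add_assoc]) (by simp [Fin.forall_fin_succ, *])
  rw [barycentric]
  simpa [Fin.sum_univ_three] using mem

lemma disjoint_halfOpenTriangle_adjacent (u v w : E2) :
    Disjoint (halfOpenTriangle u v) (halfOpenTriangle v w) :=
  disjoint_left.2 fun z ⟨_, h, _⟩ ⟨h', _, _⟩ => by linarith [det2_comm z v]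

lemma disjoint_halfOpenTriangle_neg (u v : E2) :
    Disjoint (halfOpenTriangle u v) (halfOpenTriangle (-u) (-v)) :=
  disjoint_left.2 fun z ⟨_, h, _⟩ ⟨_, h', _⟩ => by
    rw [det2_neg_right] at h'; linarith

lemma disjoint_halfOpenTriangle_of_nonneg {u v w : E2} (h : 0 ≤ det2 v w) :
    Disjoint (halfOpenTriangle u v) (halfOpenTriangle w (-u)) := by
  refine disjoint_left.2 fun z hz hz' => ?_
  have huv := det2_pos_of_mem_halfOpenTriangle hz
  have hwu := det2_pos_of_mem_halfOpenTriangle hz'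
  obtain ⟨-, h₁, -⟩ := hz
  obtain ⟨h₂, h₃, -⟩ := hz'
  have plucker : det2 u v * det2 w z + det2 v w * det2 z (-u) + det2 w (-u) * det2 z v = 0 := by
    simp only [det2, PiLp.neg_apply]; ring
  have : 0 < det2 w (-u) * det2 z v := mul_pos hwu h₁
  have : 0 ≤ det2 u v * det2 w z := mul_nonneg huv.le h₂
  have : 0 ≤ det2 v w * det2 z (-u) := mul_nonneg h h₃.le
  linarith

/-- The half of the hexagon with vertices `±p, ±q, ±r` that contains `q` and `r` and is cut off by
the diagonal from `p` to `-p`. -/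
def halfHexagon (p q r : E2) : Set E2 :=
  halfOpenTriangle p q ∪ halfOpenTriangle q r ∪ halfOpenTriangle r (-p)

lemma measurableSet_halfHexagon (p q r : E2) : MeasurableSet (halfHexagon p q r) :=
  ((measurableSet_halfOpenTriangle p q).union (measurableSet_halfOpenTriangle q r)).union
    (measurableSet_halfOpenTriangle r (-p))

lemma halfHexagon_subset {C : Set E2} (hC : Convex ℝ C) (h₀ : 0 ∈ C) {p q r : E2} (hp : p ∈ C)
    (hq : q ∈ C) (hr : r ∈ C) (hp' : -p ∈ C) : halfHexagon p q r ⊆ C :=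
  union_subset (union_subset (halfOpenTriangle_subset hC h₀ hp hq)
    (halfOpenTriangle_subset hC h₀ hq hr)) (halfOpenTriangle_subset hC h₀ hr hp')

lemma volume_halfHexagon {p q r : E2} (hpq : 0 ≤ det2 p q) (hqr : 0 ≤ det2 q r)
    (hpr : 0 ≤ det2 p r) : volume (halfHexagon p q r) =
      ENNReal.ofReal ((det2 p q + det2 q r + det2 p r) / 2) := by
  have hrp : det2 r (-p) = det2 p r := by rw [det2_neg_right, ← det2_comm]
  rw [halfHexagon, measure_union _ (measurableSet_halfOpenTriangle _ _),
    measure_union (disjoint_halfOpenTriangle_adjacent _ _ _) (measurableSet_halfOpenTriangle _ _),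
    volume_halfOpenTriangle hpq, volume_halfOpenTriangle hqr,
    volume_halfOpenTriangle (hpr.trans_eq hrp.symm), hrp, ← ENNReal.ofReal_add,
    ← ENNReal.ofReal_add, ← add_div, ← add_div]
  any_goals positivity
  exact disjoint_union_left.2
    ⟨disjoint_halfOpenTriangle_of_nonneg hqr, disjoint_halfOpenTriangle_adjacent _ _ _⟩

lemma disjoint_halfHexagon_neg {p q r : E2} (hpq : 0 ≤ det2 p q) (hpr : 0 ≤ det2 p r) :
    Disjoint (halfHexagon p q r) (halfHexagon (-p) (-q) (-r)) := by
  have hrp : 0 ≤ det2 r (-p) := by rwa [det2_neg_right, ← det2_comm]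
  have hrp' : 0 ≤ det2 (-r) p := by rwa [det2_neg_left, ← det2_comm]
  have hpq' : 0 ≤ det2 (-p) (-q) := by simpa
  have adjacent := disjoint_halfOpenTriangle_adjacent (-r) p q
  have opposite := disjoint_halfOpenTriangle_neg r (-p)
  have skip₁ := disjoint_halfOpenTriangle_of_nonneg (u := -q) hrp'
  have skip₂ := disjoint_halfOpenTriangle_of_nonneg (u := -r) hpq
  rw [neg_neg] at opposite skip₁ skip₂
  simp only [halfHexagon, neg_neg, disjoint_union_left, disjoint_union_right]
  exact ⟨⟨⟨⟨disjoint_halfOpenTriangle_neg p q, disjoint_halfOpenTriangle_of_nonneg hrp⟩,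
      disjoint_halfOpenTriangle_adjacent r (-p) (-q)⟩,
    ⟨skip₁.symm, disjoint_halfOpenTriangle_neg q r⟩, disjoint_halfOpenTriangle_of_nonneg hpq'⟩,
    ⟨adjacent.symm, skip₂.symm⟩, opposite⟩

lemma zero_mem_of_convex_of_neg_mem {C : Set E2} (hC : Convex ℝ C) (hneg : ∀ z ∈ C, -z ∈ C)
    {p : E2} (hp : p ∈ C) : 0 ∈ C := by
  simpa using hC.midpoint_mem hp (hneg p hp)

lemma volume_halfHexagon_union_neg {p q r : E2} (hpq : 0 ≤ det2 p q) (hqr : 0 ≤ det2 q r)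
    (hpr : 0 ≤ det2 p r) : volume (halfHexagon p q r ∪ halfHexagon (-p) (-q) (-r)) =
      ENNReal.ofReal (det2 p q + det2 q r + det2 p r) := by
  have neg_sum : det2 (-p) (-q) + det2 (-q) (-r) + det2 (-p) (-r) =
      det2 p q + det2 q r + det2 p r := by
    simp only [det2_neg_left, det2_neg_right, neg_neg]
  rw [measure_union (disjoint_halfHexagon_neg hpq hpr) (measurableSet_halfHexagon _ _ _),
    volume_halfHexagon hpq hqr hpr, volume_halfHexagon (by simpa) (by simpa) (by simpa), neg_sum,
    ← ENNReal.ofReal_add (by positivity) (by positivity), add_halves]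

lemma halfHexagon_union_neg_subset {C : Set E2} (hC : Convex ℝ C) (hneg : ∀ z ∈ C, -z ∈ C)
    {p q r : E2} (hp : p ∈ C) (hq : q ∈ C) (hr : r ∈ C) :
    halfHexagon p q r ∪ halfHexagon (-p) (-q) (-r) ⊆ C :=
  have h₀ : 0 ∈ C := zero_mem_of_convex_of_neg_mem hC hneg hp
  union_subset (halfHexagon_subset hC h₀ hp hq hr (hneg p hp))
    (halfHexagon_subset hC h₀ (hneg p hp) (hneg q hq) (hneg r hr) (by rwa [neg_neg]))

lemma ofReal_add_le_volume {C : Set E2} (hC : Convex ℝ C) (hneg : ∀ z ∈ C, -z ∈ C) {p q r : E2}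
    (hp : p ∈ C) (hq : q ∈ C) (hr : r ∈ C) (hpq : 0 ≤ det2 p q) (hqr : 0 ≤ det2 q r)
    (hpr : 0 ≤ det2 p r) : ENNReal.ofReal (det2 p q + det2 q r + det2 p r) ≤ volume C :=
  (volume_halfHexagon_union_neg hpq hqr hpr).ge.trans
    (measure_mono (halfHexagon_union_neg_subset hC hneg hp hq hr))

lemma hexStrips_subset_halfHexagon {p q r : E2} (h : 0 < det2 p q) :
    hexStrips p q r ⊆ {0} ∪ (halfHexagon p q r ∪ halfHexagon (-p) (-q) (-r)) := by
  rintro z ⟨h₁, h₂, h₃⟩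
  rw [det2_sub_left, abs_le] at h₁ h₂
  rw [det2_add_left, abs_le] at h₃
  by_cases hz : det2 p z = 0 ∧ det2 q z = 0
  · exact .inl (eq_zero_of_det2_eq_zero h.ne' hz.1 hz.2)
  -- The signs of `det2 p z`, `det2 q z` and `det2 r z` tell in which triangle `z` lies.
  right
  simp only [halfHexagon, halfOpenTriangle, mem_union, mem_ofPred_eq, det2_neg_left, det2_neg_right,
    neg_neg, det2_comm z, det2_comm r p]
  grind

lemma hexStrips_subset_of_mem {C : Set E2} (hC : Convex ℝ C) (hneg : ∀ z ∈ C, -z ∈ C) {p q r : E2}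
    (h : 0 < det2 p q) (hp : p ∈ C) (hq : q ∈ C) (hr : r ∈ C) : hexStrips p q r ⊆ C :=
  (hexStrips_subset_halfHexagon h).trans <| union_subset
    (singleton_subset_iff.2 (zero_mem_of_convex_of_neg_mem hC hneg hp))
    (halfHexagon_union_neg_subset hC hneg hp hq hr)

lemma volume_hexStrips_le {p q r : E2} (hpq : 0 < det2 p q) (hqr : 0 ≤ det2 q r)
    (hpr : 0 ≤ det2 p r) :
    volume (hexStrips p q r) ≤ ENNReal.ofReal (det2 p q + det2 q r + det2 p r) := by
  refine (measure_mono (hexStrips_subset_halfHexagon hpq)).trans <|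
    (measure_union_le _ _).trans ?_
  rw [measure_singleton, zero_add, volume_halfHexagon_union_neg hpq.le hqr hpr]

/-- The centrally symmetric hexagon spanned by `p`, `q`, `r` and their opposites. -/
def hexHull (p q r : E2) : Set E2 := convexHull ℝ ({p, q, r, -p, -q, -r} : Set E2)

lemma mem_hexHull_vertices (p q r : E2) :
    p ∈ hexHull p q r ∧ q ∈ hexHull p q r ∧ r ∈ hexHull p q r := by
  refine ⟨?_, ?_, ?_⟩ <;> exact subset_convexHull ℝ _ (by simp)

lemma neg_mem_hexHull {p q r z : E2} (hz : z ∈ hexHull p q r) : -z ∈ hexHull p q r := by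
  have neg_hexHull : -hexHull p q r = hexHull p q r := by
    rw [hexHull, ← convexHull_neg]
    congr 1
    ext
    simp only [Set.mem_neg, mem_insert_iff, mem_singleton_iff, neg_eq_iff_eq_neg, neg_neg]
    tauto
  rwa [← neg_hexHull, Set.neg_mem_neg]

lemma isLinearMap_det2 (v : E2) : IsLinearMap ℝ (det2 v) where
  map_add x y := by simp only [det2, PiLp.add_apply]; ring
  map_smul c x := by simp only [det2, PiLp.smul_apply, smul_eq_mul]; ring

lemma convex_abs_det2_le (v : E2) (a : ℝ) : Convex ℝ {z : E2 | |det2 v z| ≤ a} := by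
  simp only [abs_le]
  exact (convex_halfSpace_ge (isLinearMap_det2 v) (-a)).inter
    (convex_halfSpace_le (isLinearMap_det2 v) a)

lemma convex_hexStrips (p q r : E2) : Convex ℝ (hexStrips p q r) :=
  (convex_abs_det2_le _ _).inter ((convex_abs_det2_le _ _).inter (convex_abs_det2_le _ _))

lemma hexHull_subset {C : Set E2} (hC : Convex ℝ C) (hneg : ∀ z ∈ C, -z ∈ C) {p q r : E2}
    (hp : p ∈ C) (hq : q ∈ C) (hr : r ∈ C) : hexHull p q r ⊆ C := by
  refine convexHull_min ?_ hC
  rintro z (rfl | rfl | rfl | rfl | rfl | rfl)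
  exacts [hp, hq, hr, hneg _ hp, hneg _ hq, hneg _ hr]

lemma neg_mem_hexStrips {p q r z : E2} (hz : z ∈ hexStrips p q r) : -z ∈ hexStrips p q r := by
  simpa only [hexStrips, mem_ofPred_eq, det2_neg_right, abs_neg] using hz

lemma volume_setOf_det2_eq_zero {v : E2} (hv : v ≠ 0) : volume {z : E2 | det2 v z = 0} = 0 := by
  refine Measure.addHaar_submodule volume (LinearMap.ker (isLinearMap_det2 v).mk') fun htop => hv ?_
  have mem_ker : toPlane (-v 1, v 0) ∈ LinearMap.ker (isLinearMap_det2 v).mk' := by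
    rw [htop]; trivial
  have norm_sq_eq_zero : v 0 * v 0 + v 1 * v 1 = 0 := by
    simpa [det2] using mem_ker
  have := mul_self_add_mul_self_eq_zero.1 norm_sq_eq_zero
  exact plane_ext this.1 this.2

lemma volume_hexHull_eq_zero {p q r : E2} (hpq : det2 p q = 0) (hqr : det2 q r = 0)
    (hpr : det2 p r = 0) : volume (hexHull p q r) = 0 := by
  have of_ne_zero {v : E2} (hv : v ≠ 0) (hp : det2 v p = 0) (hq : det2 v q = 0)
      (hr : det2 v r = 0) : volume (hexHull p q r) = 0 :=
    measure_mono_null (hexHull_subset (C := LinearMap.ker (isLinearMap_det2 v).mk')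
      (Submodule.convex _) (fun _ => neg_mem) hp hq hr) (volume_setOf_det2_eq_zero hv)
  by_cases hp : p ≠ 0
  · exact of_ne_zero hp (by simp [det2, mul_comm]) hpq hpr
  by_cases hq : q ≠ 0
  · exact of_ne_zero hq (by rw [det2_comm, hpq, neg_zero]) (by simp [det2, mul_comm]) hqr
  by_cases hr : r ≠ 0
  · exact of_ne_zero hr (by rw [det2_comm, hpr, neg_zero]) (by rw [det2_comm, hqr, neg_zero])
      (by simp [det2, mul_comm])
  simp only [not_not] at hp hq hr
  simp [hexHull, hp, hq, hr]

lemma det2_smul_smul (t : ℝ) (u v : E2) : det2 (t • u) (t • v) = t ^ 2 * det2 u v := by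
  simp only [det2, PiLp.smul_apply, smul_eq_mul]; ring

lemma hexStrips_subset_hexStrips_smul {p q r : E2} {t : ℝ} (ht : 1 ≤ t) :
    hexStrips p q r ⊆ hexStrips (t • p) (t • q) (t • r) := by
  have abs_det2_smul_le {v z a b : E2} (h : |det2 v z| ≤ det2 a b) :
      |det2 (t • v) z| ≤ det2 (t • a) (t • b) := by
    have det2_smul : det2 (t • v) z = t * det2 v z := by
      simp only [det2, PiLp.smul_apply, smul_eq_mul]; ring
    rw [det2_smul, det2_smul_smul, abs_mul, abs_of_nonneg (by linarith), sq, mul_assoc]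
    gcongr
    exact h.trans (le_mul_of_one_le_left ((abs_nonneg _).trans h) ht)
  rintro z ⟨h₁, h₂, h₃⟩
  rw [hexStrips, ← smul_sub, ← smul_sub, ← smul_add]
  exact ⟨abs_det2_smul_le h₁, abs_det2_smul_le h₂, abs_det2_smul_le h₃⟩

lemma poincareIneq_of_subset_hexStrips {s c : ℝ} (hs₀ : 0 < s) (hs : s ^ 2 = 4 / 3)
    (hP : PoincareIneq (symHex √s (1 / 3)) c) {C : Set E2} (hC : Convex ℝ C)
    (hneg : ∀ z ∈ C, -z ∈ C) (hvol : volume C ≤ 1) {p q r : E2} (hp : p ∈ C) (hq : q ∈ C)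
    (hr : r ∈ C) (hsum : 0 < det2 p q + det2 q r + det2 p r) (hsub : C ⊆ hexStrips p q r) :
    PoincareIneq C c := by
  obtain ⟨hpq, hqr, hpr⟩ : 0 ≤ det2 p q ∧ 0 ≤ det2 q r ∧ 0 ≤ det2 p r := by
    obtain ⟨h₁, h₂, h₃⟩ := hsub hp
    exact ⟨(abs_nonneg _).trans h₁, (abs_nonneg _).trans h₂, (abs_nonneg _).trans h₃⟩
  have hpr_le : det2 p r ≤ det2 p q + det2 q r := by
    have := (abs_le.1 (hsub hp).2.1).1
    rw [det2_sub_left] at this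
    linarith [det2_comm r p, det2_comm q p]
  set A := det2 p q + det2 q r + det2 p r with hA
  have hA₁ : A ≤ 1 := by
    simpa using (ofReal_add_le_volume hC hneg hp hq hr hpq hqr hpr).trans hvol
  -- Scaling by `t` makes the area of the hexagon with vertices `±p, ±q, ±r` equal to one.
  let t := (√A)⁻¹
  have ht : 1 ≤ t := (one_le_inv₀ (Real.sqrt_pos.2 hsum)).2 (Real.sqrt_le_one.2 hA₁)
  have ht_sq : t ^ 2 * A = 1 := by
    rw [inv_pow, Real.sq_sqrt hsum.le, inv_mul_cancel₀ hsum.ne']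
  have hne : p ≠ r := by
    rintro rfl
    rw [hA, det2_comm q] at hsum
    simp only [det2] at hsum
    linarith
  have hdist : 0 < dist (t • p) (t • r) :=
    dist_pos.2 ((smul_right_injective E2 (by positivity)).ne hne)
  have hρ₀ : 0 ≤ det2 (t • p) (t • r) := by rw [det2_smul_smul]; positivity
  have hρ : det2 (t • p) (t • r) ≤ 1 / 2 := by
    rw [det2_smul_smul]
    nlinarith
  refine PoincareIneq.mono_set ?_ (hsub.trans (hexStrips_subset_hexStrips_smul ht))
  refine poincareIneq_hexStrips hdist ?_ ?_ hρ₀ hρ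
    (poincareIneq_symHex hs₀ hs hdist ⟨hρ₀, hρ⟩ hP)
  · simp only [EuclideanSpace.dist_sq_eq, Fin.sum_univ_two, Real.dist_eq, sq_abs]
  · rw [det2_smul_smul, det2_smul_smul, det2_smul_smul, ← mul_add, ← mul_add, ht_sq]

lemma exists_hexHull_subset_hexStrips {p q r : E2} (hpq : 0 ≤ det2 p q) (hqr : 0 ≤ det2 q r)
    (hpr : 0 ≤ det2 p r) (hsum : 0 < det2 p q + det2 q r + det2 p r) :
    ∃ a ∈ hexHull p q r, ∃ b ∈ hexHull p q r, ∃ d ∈ hexHull p q r,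
      0 < det2 a b + det2 b d + det2 a d ∧ hexHull p q r ⊆ hexStrips a b d := by
  obtain ⟨hp, hq, hr⟩ := mem_hexHull_vertices p q r
  suffices h : ∃ a ∈ hexHull p q r, ∃ b ∈ hexHull p q r, ∃ d ∈ hexHull p q r,
      0 < det2 a b + det2 b d + det2 a d ∧
        p ∈ hexStrips a b d ∧ q ∈ hexStrips a b d ∧ r ∈ hexStrips a b d by
    obtain ⟨a, ha, b, hb, d, hd, hpos, hp', hq', hr'⟩ := h
    exact ⟨a, ha, b, hb, d, hd, hpos,
      hexHull_subset (convex_hexStrips a b d) (fun _ => neg_mem_hexStrips) hp' hq' hr'⟩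
  have det2_self (v : E2) : det2 v v = 0 := by rw [det2, mul_comm, sub_self]
  have hqp := det2_comm q p
  have hrq := det2_comm r q
  have hrp := det2_comm r p
  simp only [hexStrips, mem_ofPred_eq, det2_sub_left, det2_add_left, abs_le]
  -- When one of the triangle inequalities between the three determinants fails, one of the points
  -- lies in the parallelogram whose vertices are the other two and their opposites.
  rcases lt_or_ge (det2 p q + det2 q r) (det2 p r) with hlt | hpr_le
  · refine ⟨p, hp, p, hp, r, hr, ?_⟩
    simp only [det2_self, hrp]
    grind
  rcases lt_or_ge (det2 q r + det2 p r) (det2 p q) with hlt | hpq_le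
  · refine ⟨p, hp, q, hq, q, hq, ?_⟩
    simp only [det2_self, hqp]
    grind
  rcases lt_or_ge (det2 p q + det2 p r) (det2 q r) with hlt | hqr_le
  · refine ⟨q, hq, q, hq, r, hr, ?_⟩
    simp only [det2_self, hqp, hrq, hrp]
    grind
  · refine ⟨p, hp, q, hq, r, hr, hsum, ?_⟩
    simp only [det2_self, hqp, hrq, hrp]
    grind

lemma poincareIneq_hexHull_of_nonneg {s c : ℝ} (hs₀ : 0 < s) (hs : s ^ 2 = 4 / 3)
    (hP : PoincareIneq (symHex √s (1 / 3)) c) {p q r : E2} (hvol : volume (hexHull p q r) = 1)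
    (hpq : 0 ≤ det2 p q) (hqr : 0 ≤ det2 q r) (hpr : 0 ≤ det2 p r) :
    PoincareIneq (hexHull p q r) c := by
  have hsum : 0 < det2 p q + det2 q r + det2 p r := by
    by_contra! hle
    exact one_ne_zero (hvol.symm.trans
      (volume_hexHull_eq_zero (by linarith) (by linarith) (by linarith)))
  obtain ⟨a, ha, b, hb, d, hd, hpos, hsub⟩ := exists_hexHull_subset_hexStrips hpq hqr hpr hsum
  exact poincareIneq_of_subset_hexStrips hs₀ hs hP (convex_convexHull ℝ _)
    (fun _ => neg_mem_hexHull) hvol.le ha hb hd hpos hsub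

lemma poincareIneq_hexHull {s c : ℝ} (hs₀ : 0 < s) (hs : s ^ 2 = 4 / 3)
    (hP : PoincareIneq (symHex √s (1 / 3)) c) {p q r : E2} (hvol : volume (hexHull p q r) = 1) :
    PoincareIneq (hexHull p q r) c := by
  have of_vertices {a b d : E2}
      (heq : ∀ z, z ∈ ({a, b, d, -a, -b, -d} : Set E2) ↔ z ∈ ({p, q, r, -p, -q, -r} : Set E2))
      (h : 0 ≤ det2 a b ∧ 0 ≤ det2 b d ∧ 0 ≤ det2 a d) : PoincareIneq (hexHull p q r) c := by
    have hexHull_eq : hexHull a b d = hexHull p q r := congrArg (convexHull ℝ) (Set.ext heq)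
    rw [← hexHull_eq] at hvol ⊢
    exact poincareIneq_hexHull_of_nonneg hs₀ hs hP hvol h.1 h.2.1 h.2.2
  simp only [mem_insert_iff, mem_singleton_iff] at of_vertices
  -- Permuting `p`, `q`, `r` and changing their signs makes the three determinants nonnegative.
  have hqp := det2_comm q p
  have hrq := det2_comm r q
  have hrp := det2_comm r p
  rcases le_total 0 (det2 p q) with hpq | hpq <;> rcases le_total 0 (det2 q r) with hqr | hqr <;>
    rcases le_total 0 (det2 p r) with hpr | hpr
  · exact of_vertices (fun z => .rfl) ⟨hpq, hqr, hpr⟩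
  · refine of_vertices (a := r) (b := -q) (d := p) (by grind) ?_
    simp only [det2_neg_left, det2_neg_right]; grind
  · exact of_vertices (a := p) (b := r) (d := q) (by grind) (by grind)
  · refine of_vertices (a := p) (b := q) (d := -r) (by grind) ?_
    simp only [det2_neg_right]; grind
  · exact of_vertices (a := q) (b := p) (d := r) (by grind) (by grind)
  · refine of_vertices (a := -p) (b := q) (d := r) (by grind) ?_
    simp only [det2_neg_left]; grind
  · refine of_vertices (a := p) (b := -q) (d := r) (by grind) ?_
    simp only [det2_neg_left, det2_neg_right]; grind
  · exact of_vertices (a := r) (b := q) (d := p) (by grind) (by grind)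

lemma poincareIneq_of_hex {s c : ℝ} (hs₀ : 0 < s) (hs : s ^ 2 = 4 / 3)
    (hP : PoincareIneq (symHex √s (1 / 3)) c) {H : Set E2} (hH : Hex H) (hvol : volume H = 1) :
    PoincareIneq H c := by
  obtain ⟨⟨x₀, p, q, r, rfl⟩, -⟩ := hH
  rw [Set.image_add_left, measure_preimage_add] at hvol
  simpa [hexHull] using (poincareIneq_hexHull hs₀ hs hP hvol).of_similarity
    (E := (fun y => x₀ + y) '' hexHull p q r) (.refl ℝ E2) one_ne_zero x₀ (by simp)

/-! ### Regular hexagons -/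

lemma hexVertex_zero : hexVertex 0 = toPlane (1, 0) := by
  change toPlane (cos ((0 : ℕ) * π / 3), sin ((0 : ℕ) * π / 3)) = _
  simp

lemma hexVertex_one : hexVertex 1 = toPlane (1 / 2, √3 / 2) := by
  change toPlane (cos ((1 : ℕ) * π / 3), sin ((1 : ℕ) * π / 3)) = _
  simp

lemma hexVertex_two : hexVertex 2 = toPlane (-(1 / 2), √3 / 2) := by
  change toPlane (cos ((2 : ℕ) * π / 3), sin ((2 : ℕ) * π / 3)) = _
  rw [show (2 : ℕ) * π / 3 = π - π / 3 by push_cast; ring, cos_pi_sub, sin_pi_sub, cos_pi_div_three,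
    sin_pi_div_three]

lemma hexVertex_add_three (k : ℕ) : hexVertex (k + 3) = -hexVertex k := by
  change toPlane (cos ((k + 3 : ℕ) * π / 3), sin ((k + 3 : ℕ) * π / 3)) =
    -toPlane (cos (k * π / 3), sin (k * π / 3))
  rw [show (k + 3 : ℕ) * π / 3 = k * π / 3 + π by push_cast; ring, cos_add_pi, sin_add_pi,
    ← map_neg, Prod.neg_mk]

lemma stdHexagon_eq_hexHull :
    stdHexagon = hexHull (hexVertex 0) (hexVertex 1) (hexVertex 2) := by
  refine congrArg (convexHull ℝ) (Set.ext fun z => ?_)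
  simp only [mem_range, Fin.exists_fin_succ, ← hexVertex_add_three, mem_insert_iff,
    mem_singleton_iff, eq_comm (a := z)]
  simp

lemma det2_hexVertex :
    det2 (hexVertex 0) (hexVertex 1) = √3 / 2 ∧ det2 (hexVertex 1) (hexVertex 2) = √3 / 2 ∧
      det2 (hexVertex 0) (hexVertex 2) = √3 / 2 := by
  rw [hexVertex_zero, hexVertex_one, hexVertex_two]
  refine ⟨?_, ?_, ?_⟩ <;> simp only [det2, toPlane_zero, toPlane_one] <;> ring

lemma stdHexagon_eq_hexStrips :
    stdHexagon = hexStrips (hexVertex 0) (hexVertex 1) (hexVertex 2) := by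
  obtain ⟨h₀₁, h₁₂, h₀₂⟩ := det2_hexVertex
  obtain ⟨h₀, h₁, h₂⟩ := mem_hexHull_vertices (hexVertex 0) (hexVertex 1) (hexVertex 2)
  have sqrt_pos : 0 < √3 := by positivity
  rw [stdHexagon_eq_hexHull]
  refine Subset.antisymm (hexHull_subset (convex_hexStrips _ _ _) (fun _ => neg_mem_hexStrips)
    ?_ ?_ ?_) (hexStrips_subset_of_mem (convex_convexHull ℝ _) (fun _ => neg_mem_hexHull)
      (by rw [h₀₁]; positivity) h₀ h₁ h₂)
  all_goals
    simp only [hexStrips, mem_ofPred_eq, det2_sub_left, det2_add_left, abs_le, h₀₁, h₁₂, h₀₂]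
    grind [det2_comm (hexVertex 1) (hexVertex 0), det2_comm (hexVertex 2) (hexVertex 0),
      det2_comm (hexVertex 2) (hexVertex 1), det2_comm (hexVertex 0) (hexVertex 0),
      det2_comm (hexVertex 1) (hexVertex 1), det2_comm (hexVertex 2) (hexVertex 2)]

lemma volume_stdHexagon_le : volume stdHexagon ≤ ENNReal.ofReal (3 * √3 / 2) := by
  obtain ⟨h₀₁, h₁₂, h₀₂⟩ := det2_hexVertex
  have volume_le := volume_hexStrips_le (p := hexVertex 0) (q := hexVertex 1) (r := hexVertex 2)
    (by rw [h₀₁]; positivity) (by rw [h₁₂]; positivity) (by rw [h₀₂]; positivity)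
  rw [h₀₁, h₁₂, h₀₂] at volume_le
  rw [stdHexagon_eq_hexStrips]
  exact volume_le.trans_eq (congrArg _ (by ring))

lemma mem_stdHexagon {z : E2} (h₁ : 2 * |z 1| ≤ √3) (h₂ : √3 * |z 0| + |z 1| ≤ √3) :
    z ∈ stdHexagon := by
  obtain ⟨h₀₁, h₁₂, h₀₂⟩ := det2_hexVertex
  rw [stdHexagon_eq_hexStrips, hexStrips, mem_ofPred_eq, h₀₁, h₁₂, h₀₂]
  have abs_mul_eq : |√3 * z 0| = √3 * |z 0| := by rw [abs_mul, abs_of_pos (by positivity)]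
  obtain ⟨hx, hx'⟩ := abs_le.1 abs_mul_eq.le
  obtain ⟨hy, hy'⟩ := abs_le.1 (le_refl |z 1|)
  simp only [hexVertex_zero, hexVertex_one, hexVertex_two, det2, PiLp.sub_apply, PiLp.add_apply,
    toPlane_zero, toPlane_one, abs_le]
  refine ⟨⟨?_, ?_⟩, ⟨?_, ?_⟩, ⟨?_, ?_⟩⟩ <;> linarith

lemma IsSimilarity.exists_eq {f : E2 → E2} (hf : IsSimilarity f) :
    ∃ (s : ℝ) (B : E2 ≃ₗᵢ[ℝ] E2), 0 < s ∧ ∀ x, f x = f 0 + s • B x := by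
  obtain ⟨s, hs, dist_eq⟩ := hf
  have isometry : Isometry fun x => s⁻¹ • (f x - f 0) := Isometry.of_dist_eq fun x y => by
    rw [dist_smul₀, dist_sub_right, dist_eq, Real.norm_eq_abs, abs_of_pos (inv_pos.2 hs),
      inv_mul_cancel_left₀ hs.ne']
  let A := isometry.affineIsometryOfStrictConvexSpace
  refine ⟨s, A.linearIsometry.toLinearIsometryEquiv rfl, hs, fun x => ?_⟩
  have apply_eq : A.linearIsometry x = s⁻¹ • (f x - f 0) := by
    simpa [A] using A.map_vsub x 0
  rw [LinearIsometry.coe_toLinearIsometryEquiv, apply_eq, smul_inv_smul₀ hs.ne', add_sub_cancel]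

lemma volume_image_similarity (B : E2 ≃ₗᵢ[ℝ] E2) (s : ℝ) (x₁ : E2) (E : Set E2) :
    volume ((fun x => x₁ + s • B x) '' E) = ENNReal.ofReal (s ^ 2) * volume E := by
  have image_eq : (fun x => x₁ + s • B x) '' E =
      (fun y => x₁ + y) '' ((fun y => s • y) '' (B '' E)) := by
    simp only [Set.image_image]
  rw [image_eq, Set.image_add_left, measure_preimage_add, Set.image_smul, Measure.addHaar_smul,
    finrank_euclideanSpace_fin, abs_of_nonneg (sq_nonneg s)]
  congr 1
  rw [B.image_eq_preimage_symm]
  exact B.symm.measurePreserving.measure_preimage_equiv (f := B.symm.toMeasurableEquiv) E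

lemma inv_smul_mem_stdHexagon {s S : ℝ} (hs : 0 < s) (hS₀ : 0 < S) (hS : √3 * S = 2)
    (hle : √S ≤ √3 * s) {z : E2} (hz : rotPlane 0 1 (by norm_num) z ∈ symHex √S (1 / 3)) :
    s⁻¹ • z ∈ stdHexagon := by
  have abs_inv_smul (i) : |(s⁻¹ • z) i| = |z i| / s := by
    rw [PiLp.smul_apply, smul_eq_mul, abs_mul, abs_of_pos (inv_pos.2 hs), div_eq_inv_mul]
  have sqrt_three : √3 = 3 / 2 * S := by nlinarith [Real.sq_sqrt (show (0 : ℝ) ≤ 3 by norm_num)]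
  obtain ⟨h₁, h₂⟩ := hz
  simp only [rotPlane_zero, rotPlane_one, zero_mul, one_mul, zero_add, neg_mul, add_zero, abs_neg,
    Real.sq_sqrt hS₀.le] at h₁ h₂
  apply mem_stdHexagon <;> simp only [abs_inv_smul] <;> field_simp
  · linarith
  · rw [sqrt_three] at hle ⊢
    linarith

lemma poincareIneq_symHex_of_isRegularHexagon {E : Set E2} (hreg : IsRegularHexagon E)
    (hvol : volume E = 1) {c S : ℝ} (hS₀ : 0 < S) (hS : S ^ 2 = 4 / 3) (hP : PoincareIneq E c) :
    PoincareIneq (symHex √S (1 / 3)) c := by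
  obtain ⟨f, hf, rfl⟩ := hreg
  obtain ⟨s, B, hs, hfB⟩ := hf.exists_eq
  have sqrt_three_sq : √3 ^ 2 = 3 := Real.sq_sqrt (by norm_num)
  have sqrt_three_mul : √3 * S = 2 := by
    refine (pow_left_inj₀ (by positivity) (by norm_num) two_ne_zero).1 ?_
    rw [mul_pow, sqrt_three_sq, hS]; norm_num
  have one_le_area : 1 ≤ s ^ 2 * (3 * √3 / 2) := by
    rw [funext hfB, volume_image_similarity] at hvol
    have := mul_le_mul_right volume_stdHexagon_le (ENNReal.ofReal (s ^ 2))
    rwa [hvol, ← ENNReal.ofReal_mul (by positivity), ENNReal.one_le_ofReal] at this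
  have sqrt_le : √S ≤ √3 * s := by
    refine Real.sqrt_le_iff.2 ⟨by positivity, ?_⟩
    rw [mul_pow, sqrt_three_sq]
    nlinarith
  let R := B.symm.trans (rotPlane 0 1 (by norm_num))
  have mem_image (z) (hz : -R (f 0) + (1 : ℝ) • R z ∈ symHex √S (1 / 3)) : z ∈ f '' stdHexagon := by
    rw [one_smul, neg_add_eq_sub, ← map_sub] at hz
    refine ⟨_, inv_smul_mem_stdHexagon hs hS₀ sqrt_three_mul sqrt_le hz, ?_⟩
    rw [hfB, map_smul, smul_inv_smul₀ hs.ne']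
    exact (congrArg _ (B.apply_symm_apply _)).trans (add_sub_cancel _ _)
  simpa using hP.of_similarity R one_ne_zero _ mem_image

/-- Among convex polygons of unit area tiling the plane by translations,
the regular hexagon minimizes the first Dirichlet Laplacian eigenvalue. -/
theorem statement15 (Hstar : Set E2) (hreg : IsRegularHexagon Hstar)
    (hvolstar : volume Hstar = 1) :
    ∀ H : Set E2, Hex H → volume H = 1 →
      dirichletEigenvalue Hstar ≤ dirichletEigenvalue H := by
  intro H hH hvol
  have sqrt_pos : 0 < √(4 / 3) := by positivity
  have sq_sqrt : √(4 / 3) ^ 2 = 4 / 3 := Real.sq_sqrt (by norm_num)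
  have hP : PoincareIneq (symHex √√(4 / 3) (1 / 3)) (dirichletEigenvalue Hstar) :=
    poincareIneq_symHex_of_isRegularHexagon hreg hvolstar sqrt_pos sq_sqrt
      (poincareIneq_dirichletEigenvalue Hstar)
  exact (poincareIneq_of_hex sqrt_pos sq_sqrt hP hH hvol).le_dirichletEigenvalue hH.2
end
end

section
/- Let E ⊆ ℝ² be a compact convex set with nonempty interior and let π ⊆ ℝ² be an affine line. Then the Steiner symmetrization S_π(E) is again a compact convex set with nonempty interior, and its Lebesgue measure satisfies |S_π(E)| = |E|. -/
open MeasureTheory Metric Filter Real Set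
open scoped Topology ENNReal NNReal RealInnerProductSpace

noncomputable section

/-!
On a line in direction `v`, a compact convex set `A` cuts out a segment `I`, and the condition
`2 * |r| ≤ |I|` says exactly that `2 * r` is a difference of two points of `I`. Hence the
symmetrization consists of the points `p + (c - ⟪m, v⟫) • v`, where `p` and `q` run over the pairs
of points of `A` on a common line in direction `v` and `m` is the midpoint of `p` and `q`: the chord
`pq` is slid along its line until it is centered on the hyperplane. This exhibits the symmetrization
as an affine image of a compact convex set of pairs. Its slices in direction `v` have the same
lengths as those of `A`, so the volume is preserved by Fubini's theorem, and a convex set of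
positive volume has nonempty interior.
-/

lemma interior_nonempty_of_convex_of_measure_ne_zero {V : Type*} [NormedAddCommGroup V]
    [NormedSpace ℝ V] [FiniteDimensional ℝ V] [MeasurableSpace V] [BorelSpace V] {μ : Measure V}
    [μ.IsAddHaarMeasure] {A : Set V} (hA : Convex ℝ A) (h : μ A ≠ 0) : (interior A).Nonempty := by
  by_contra! hempty
  refine h (measure_mono_null ?_ (hA.addHaar_frontier μ))
  rw [frontier, hempty, sdiff_empty]
  exact subset_closure

section IntervalDifferences

open scoped Pointwise

lemma sub_self_eq_closedBall {I : Set ℝ} (hne : I.Nonempty) (hconv : Convex ℝ I)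
    (hcomp : IsCompact I) : I - I = closedBall 0 (volume.real I) := by
  have hI := eq_Icc_of_connected_compact ⟨hne, hconv.isPreconnected⟩ hcomp
  set a := sInf I
  set b := sSup I
  have hab : a ≤ b := nonempty_Icc.1 (hI ▸ hne)
  rw [hI, Real.volume_real_Icc_of_le hab]
  ext d
  rw [mem_closedBall_zero_iff, Real.norm_eq_abs, abs_le]
  constructor
  · rintro ⟨s, hs, t, ht, rfl⟩
    constructor <;> linarith [hs.1, hs.2, ht.1, ht.2]
  · rintro ⟨hd, hd'⟩
    refine ⟨(a + b + d) / 2, ⟨?_, ?_⟩, (a + b - d) / 2, ⟨?_, ?_⟩, by ring⟩ <;> linarith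

lemma mem_sub_self_iff_ofReal_abs_le_volume {I : Set ℝ} (hne : I.Nonempty) (hconv : Convex ℝ I)
    (hcomp : IsCompact I) {d : ℝ} : d ∈ I - I ↔ ENNReal.ofReal |d| ≤ volume I := by
  rw [sub_self_eq_closedBall hne hconv hcomp, mem_closedBall_zero_iff, Real.norm_eq_abs,
    ENNReal.ofReal_le_iff_le_toReal hcomp.measure_ne_top, measureReal_def]

end IntervalDifferences

section LineSlice

variable {V : Type*} [AddCommGroup V] [Module ℝ V]

/-- The slice of `A` by the line through `x` in direction `v`, read off in the parameter `t` of
`x + t • v`; for a unit vector `v` its Lebesgue measure is the length of the part of the line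
inside `A`. -/
def lineSlice (x v : V) (A : Set V) : Set ℝ :=
  {t : ℝ | x + t • v ∈ A}

lemma mem_lineSlice {x v : V} {A : Set V} {t : ℝ} : t ∈ lineSlice x v A ↔ x + t • v ∈ A :=
  Iff.rfl

lemma lineSlice_add_smul (x v : V) (r : ℝ) (A : Set V) :
    lineSlice (x + r • v) v A = (r + ·) ⁻¹' lineSlice x v A := by
  ext t
  simp only [mem_lineSlice, mem_preimage, add_smul, add_assoc]

lemma lineSlice_add_smul_nonempty_iff {x v : V} {r : ℝ} {A : Set V} :
    (lineSlice (x + r • v) v A).Nonempty ↔ (lineSlice x v A).Nonempty := by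
  rw [lineSlice_add_smul, (add_left_surjective r).nonempty_preimage]

lemma volume_lineSlice_add_smul (x v : V) (r : ℝ) (A : Set V) :
    volume (lineSlice (x + r • v) v A) = volume (lineSlice x v A) := by
  rw [lineSlice_add_smul, measure_preimage_add]

lemma convex_lineSlice {A : Set V} (hA : Convex ℝ A) (x v : V) : Convex ℝ (lineSlice x v A) :=
  (hA.translate_preimage_right x).linear_preimage (LinearMap.toSpanSingleton ℝ V v)

lemma measurable_volume_lineSlice [MeasurableSpace V] [MeasurableAdd₂ V] [MeasurableSMul ℝ V]
    (v : V) {A : Set V} (hA : MeasurableSet A) :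
    Measurable fun x => volume (lineSlice x v A) :=
  measurable_measure_prodMk_left
    ((by fun_prop : Measurable fun p : V × ℝ => p.1 + p.2 • v) hA)

end LineSlice

section UnitLineSlice

variable {V : Type*} [NormedAddCommGroup V] [NormedSpace ℝ V] {v : V}

lemma isometry_add_smul_of_norm_eq_one (hv : ‖v‖ = 1) (x : V) :
    Isometry fun t : ℝ => x + t • v :=
  (IsometryEquiv.addLeft x).isometry.comp <| (ℝ ∙ v).subtypeₗᵢ.isometry.comp
    (LinearIsometryEquiv.toSpanUnitSingleton v hv).isometry

lemma isCompact_lineSlice (hv : ‖v‖ = 1) {A : Set V} (hA : IsCompact A) (x : V) :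
    IsCompact (lineSlice x v A) :=
  (isometry_add_smul_of_norm_eq_one hv x).isClosedEmbedding.isCompact_preimage hA

lemma hausdorffMeasure_inter_range_add_smul [MeasurableSpace V] [BorelSpace V] (hv : ‖v‖ = 1)
    (x : V) (A : Set V) :
    μH[1] (A ∩ range fun t : ℝ => x + t • v) = volume (lineSlice x v A) := by
  rw [← (isometry_add_smul_of_norm_eq_one hv x).hausdorffMeasure_preimage (Or.inl zero_le_one),
    hausdorffMeasure_real]
  rfl

end UnitLineSlice

section Fubini

variable {V : Type*} [NormedAddCommGroup V] [InnerProductSpace ℝ V] [FiniteDimensional ℝ V]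
  [MeasurableSpace V] [BorelSpace V]

lemma measurePreserving_orthogonal_add_smul {v : V} (hv : ‖v‖ = 1) :
    MeasurePreserving fun p : (ℝ ∙ v)ᗮ × ℝ => (p.1 : V) + p.2 • v := by
  have h := ((ℝ ∙ v).orthogonalDecomposition.symm.measurePreserving.comp
    (WithLp.volume_preserving_toLp (ℝ ∙ v) (ℝ ∙ v)ᗮ)).comp
    (((LinearIsometryEquiv.toSpanUnitSingleton v hv).measurePreserving.prod
      (MeasurePreserving.id volume)).comp Measure.measurePreserving_swap)
  convert! h using 1
  ext p
  exact add_comm (p.1 : V) (p.2 • v)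

lemma volume_eq_lintegral_volume_lineSlice {v : V} (hv : ‖v‖ = 1) {A : Set V}
    (hA : MeasurableSet A) :
    volume A = ∫⁻ w : (ℝ ∙ v)ᗮ, volume (lineSlice (w : V) v A) := by
  have hmp := measurePreserving_orthogonal_add_smul hv
  rw [← hmp.measure_preimage hA.nullMeasurableSet, Measure.volume_eq_prod,
    Measure.prod_apply (hmp.measurable hA)]
  rfl

end Fubini

section Symmetral

open scoped Pointwise

variable {V : Type*} [NormedAddCommGroup V] [InnerProductSpace ℝ V] {v : V} {c : ℝ} {A : Set V}

lemma inner_add_smul_of_norm_eq_one (hv : ‖v‖ = 1) (x : V) (r : ℝ) :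
    ⟪x + r • v, v⟫ = ⟪x, v⟫ + r := by
  rw [inner_add_left, real_inner_smul_left, real_inner_self_eq_norm_sq, hv, one_pow, mul_one]

/-- The Steiner symmetrization of `A` with respect to the hyperplane `{x | ⟪x, v⟫ = c}` of a real
inner product space, where `v` is a unit vector. The point `y` lies at signed distance
`⟪y, v⟫ - c` from the hyperplane, so it is kept when the line through it in direction `v` meets
`A` in length at least twice this distance. -/
def steinerSymmetral (v : V) (c : ℝ) (A : Set V) : Set V :=
  {y | (lineSlice y v A).Nonempty ∧
    ENNReal.ofReal (2 * |⟪y, v⟫ - c|) ≤ volume (lineSlice y v A)}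

lemma mem_steinerSymmetral_iff (hv : ‖v‖ = 1) (hcomp : IsCompact A) (hconv : Convex ℝ A) {y : V} :
    y ∈ steinerSymmetral v c A ↔ 2 * (⟪y, v⟫ - c) ∈ lineSlice y v A - lineSlice y v A := by
  rcases (lineSlice y v A).eq_empty_or_nonempty with hempty | hne
  · simp [steinerSymmetral, hempty]
  · rw [mem_sub_self_iff_ofReal_abs_le_volume hne (convex_lineSlice hconv y v)
      (isCompact_lineSlice hv hcomp y), abs_mul, abs_two]
    exact and_iff_right hne

/-- Pairs of points of `A` lying on a common line in direction `v`. -/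
def parallelChords (v : V) (A : Set V) : Set (V × V) :=
  A ×ˢ A ∩ (.fst ℝ V V - .snd ℝ V V : V × V →L[ℝ] V) ⁻¹' (ℝ ∙ v)

lemma isCompact_parallelChords (hA : IsCompact A) (v : V) : IsCompact (parallelChords v A) :=
  (hA.prod hA).inter_right <|
    (ℝ ∙ v).closed_of_finiteDimensional.preimage (ContinuousLinearMap.continuous _)

lemma convex_parallelChords (hA : Convex ℝ A) (v : V) : Convex ℝ (parallelChords v A) :=
  (hA.prod hA).inter <| (ℝ ∙ v).convex.linear_preimage
    (.fst ℝ V V - .snd ℝ V V : V × V →L[ℝ] V).toLinearMap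

/-- For a unit vector `v`, slides a chord `(p, q)` in direction `v` until its midpoint is orthogonal
to `v`, and returns the new position of `p`. -/
def centerChord (v : V) : V × V →L[ℝ] V :=
  .fst ℝ V V - (innerSL ℝ v ∘L ((1 / 2 : ℝ) • (.fst ℝ V V + .snd ℝ V V))).smulRight v

lemma centerChord_apply (v p q : V) :
    centerChord v (p, q) = p - ((⟪p, v⟫ + ⟪q, v⟫) / 2) • v := by
  simp [centerChord, real_inner_comm v, div_eq_inv_mul, mul_add]

lemma steinerSymmetral_eq_image_centerChord (hv : ‖v‖ = 1) (hcomp : IsCompact A)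
    (hconv : Convex ℝ A) :
    steinerSymmetral v c A = (c • v + ·) '' (centerChord v '' parallelChords v A) := by
  ext y
  rw [mem_steinerSymmetral_iff hv hcomp hconv]
  constructor
  · rintro ⟨s, hs, t, ht, hst⟩
    refine ⟨_, ⟨(y + s • v, y + t • v), ⟨⟨hs, ht⟩, ?_⟩, rfl⟩, ?_⟩
    · exact Submodule.mem_span_singleton.2 ⟨s - t, by simp [sub_smul]⟩
    · have hy : ⟪y, v⟫ = c + (s - t) / 2 := by linarith
      simp only [centerChord_apply, inner_add_smul_of_norm_eq_one hv, hy]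
      module
  · rintro ⟨_, ⟨⟨p, q⟩, ⟨⟨hp, hq⟩, hpq⟩, rfl⟩, rfl⟩
    obtain ⟨k, hk⟩ := Submodule.mem_span_singleton.1 hpq
    obtain rfl : p = q + k • v := by rw [hk]; simp
    have hy : c • v + centerChord v (q + k • v, q) = q + (c - ⟪q, v⟫ + k / 2) • v := by
      rw [centerChord_apply, inner_add_smul_of_norm_eq_one hv]
      module
    simp only [hy]
    refine ⟨⟪q, v⟫ - c + k / 2, ?_, ⟪q, v⟫ - c - k / 2, ?_, ?_⟩
    · rw [mem_lineSlice]
      convert hp using 1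
      module
    · rw [mem_lineSlice]
      convert hq using 1
      module
    · simp only [inner_add_smul_of_norm_eq_one hv]
      ring

lemma isCompact_steinerSymmetral (hv : ‖v‖ = 1) (c : ℝ) (hcomp : IsCompact A)
    (hconv : Convex ℝ A) : IsCompact (steinerSymmetral v c A) := by
  rw [steinerSymmetral_eq_image_centerChord hv hcomp hconv]
  exact ((isCompact_parallelChords hcomp v).image (centerChord v).continuous).image
    (continuous_const_add _)

lemma convex_steinerSymmetral (hv : ‖v‖ = 1) (c : ℝ) (hcomp : IsCompact A)
    (hconv : Convex ℝ A) : Convex ℝ (steinerSymmetral v c A) := by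
  rw [steinerSymmetral_eq_image_centerChord hv hcomp hconv]
  exact ((convex_parallelChords hconv v).linear_image (centerChord v).toLinearMap).translate _

lemma lineSlice_steinerSymmetral (hv : ‖v‖ = 1) (c : ℝ) {x : V} (hne : (lineSlice x v A).Nonempty)
    (hfin : volume (lineSlice x v A) ≠ ∞) :
    lineSlice x v (steinerSymmetral v c A) =
      closedBall (c - ⟪x, v⟫) (volume.real (lineSlice x v A) / 2) := by
  ext r
  have hcenter : r - (c - ⟪x, v⟫) = ⟪x, v⟫ + r - c := by ring
  rw [mem_closedBall, Real.dist_eq, hcenter, le_div_iff₀' two_pos, measureReal_def,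
    ← ENNReal.ofReal_le_iff_le_toReal hfin, ← inner_add_smul_of_norm_eq_one hv,
    ← volume_lineSlice_add_smul x v r]
  exact and_iff_right (lineSlice_add_smul_nonempty_iff.2 hne)

lemma volume_lineSlice_steinerSymmetral (hv : ‖v‖ = 1) (c : ℝ) {x : V}
    (hfin : volume (lineSlice x v A) ≠ ∞) :
    volume (lineSlice x v (steinerSymmetral v c A)) = volume (lineSlice x v A) := by
  rcases (lineSlice x v A).eq_empty_or_nonempty with hempty | hne
  · have : lineSlice x v (steinerSymmetral v c A) = ∅ :=
      eq_empty_of_forall_notMem fun r hr =>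
        (lineSlice_add_smul_nonempty_iff.1 hr.1).ne_empty hempty
    rw [this, hempty]
  · rw [lineSlice_steinerSymmetral hv c hne hfin, Real.volume_closedBall,
      mul_div_cancel₀ _ two_ne_zero, ofReal_measureReal hfin]

variable [FiniteDimensional ℝ V] [MeasurableSpace V] [BorelSpace V]

lemma measurableSet_steinerSymmetral (v : V) (c : ℝ) (hA : IsCompact A) :
    MeasurableSet (steinerSymmetral v c A) := by
  have hshadow : {y | (lineSlice y v A).Nonempty} = A + (ℝ ∙ v : Set V) := by
    ext y
    constructor
    · rintro ⟨t, ht⟩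
      exact ⟨y + t • v, ht, -t • v, Submodule.mem_span_singleton.2 ⟨-t, rfl⟩, by module⟩
    · rintro ⟨a, ha, w, hw, rfl⟩
      obtain ⟨t, rfl⟩ := Submodule.mem_span_singleton.1 hw
      exact ⟨-t, by simpa [mem_lineSlice] using ha⟩
  have hclosed : IsClosed {y | (lineSlice y v A).Nonempty} := by
    rw [hshadow]
    exact (ℝ ∙ v).closed_of_finiteDimensional.add_left_of_isCompact hA
  exact hclosed.measurableSet.inter <|
    measurableSet_le (by fun_prop) (measurable_volume_lineSlice v hA.measurableSet)

lemma volume_steinerSymmetral (hv : ‖v‖ = 1) (c : ℝ) (hA : IsCompact A) :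
    volume (steinerSymmetral v c A) = volume A := by
  rw [volume_eq_lintegral_volume_lineSlice hv (measurableSet_steinerSymmetral v c hA),
    volume_eq_lintegral_volume_lineSlice hv hA.measurableSet]
  exact lintegral_congr fun w =>
    volume_lineSlice_steinerSymmetral hv c (isCompact_lineSlice hv hA _).measure_ne_top

theorem statement16_general (hcomp : IsCompact A) (hconv : Convex ℝ A)
    (hint : (interior A).Nonempty) (hv : ‖v‖ = 1) (c : ℝ) :
    IsCompact (steinerSymmetral v c A) ∧ Convex ℝ (steinerSymmetral v c A) ∧
    (interior (steinerSymmetral v c A)).Nonempty ∧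
    volume (steinerSymmetral v c A) = volume A := by
  have hconv' := convex_steinerSymmetral hv c hcomp hconv
  have hvol := volume_steinerSymmetral hv c hcomp
  have hpos : volume (steinerSymmetral v c A) ≠ 0 :=
    hvol ▸ (Measure.measure_pos_of_nonempty_interior volume hint).ne'
  exact ⟨isCompact_steinerSymmetral hv c hcomp hconv, hconv',
    interior_nonempty_of_convex_of_measure_ne_zero hconv' hpos, hvol⟩

end Symmetral

lemma steiner_eq_steinerSymmetral {v : E2} (hv : ‖v‖ = 1) (c : ℝ) (A : Set E2) :
    steiner v c A = steinerSymmetral v c A := by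
  have hline : ∀ x, lineThrough x v = range fun t : ℝ => x + t • v := fun x => by
    ext y
    simp only [lineThrough, mem_ofPred_eq, mem_range, eq_comm]
  have hne : ∀ x, (A ∩ lineThrough x v).Nonempty ↔ (lineSlice x v A).Nonempty := fun x => by
    rw [hline, ← image_preimage_eq_inter_range, image_nonempty]
    rfl
  have hlength : ∀ x, μH[1] (A ∩ lineThrough x v) = volume (lineSlice x v A) := fun x => by
    rw [hline, hausdorffMeasure_inter_range_add_smul hv]
  ext y
  simp only [steiner, steinerSymmetral, mem_ofPred_eq, hne, hlength]
  constructor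
  · rintro ⟨x, hx, hnonempty, r, rfl, hr⟩
    rw [lineSlice_add_smul_nonempty_iff, volume_lineSlice_add_smul,
      inner_add_smul_of_norm_eq_one hv, hx, add_sub_cancel_left]
    exact ⟨hnonempty, hr⟩
  · rintro ⟨hnonempty, hy⟩
    refine ⟨y + (c - ⟪y, v⟫) • v, ?_, lineSlice_add_smul_nonempty_iff.2 hnonempty, ⟪y, v⟫ - c,
      by module, ?_⟩
    · rw [inner_add_smul_of_norm_eq_one hv, add_sub_cancel]
    · rwa [volume_lineSlice_add_smul]

/-- The Steiner symmetrization of a compact convex planar set with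
nonempty interior is again a compact convex set with nonempty interior, of the same
Lebesgue measure. -/
theorem statement16 (E : Set E2) (hcomp : IsCompact E) (hconv : Convex ℝ E)
    (hint : (interior E).Nonempty) (v : E2) (hv : ‖v‖ = 1) (c : ℝ) :
    IsCompact (steiner v c E) ∧ Convex ℝ (steiner v c E) ∧
    (interior (steiner v c E)).Nonempty ∧ volume (steiner v c E) = volume E := by
  rw [steiner_eq_steinerSymmetral hv]
  exact statement16_general hcomp hconv hint hv c
end
end
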